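/- Let n > 1 be an integer coprime to 6. There exist infinitely many pairwise non-isomorphic number fields K with the following properties: there is a positive integer y with y not divisible by 5, y not divisible by 7, and y ≡ 49 (mod 144) if n ≡ 1 (mod 3), y ≡ 97 (mod 144) if n ≡ 2 (mod 3), such that the polynomial x⁸ + ((yⁿ−481)/36)x⁶ − ((yⁿ−733)/18)x⁴ + ((yⁿ−481)/36)x² + 1 is irreducible over ℚ and K is its splitting field; K is a totally imaginary Galois extension of ℚ of degree 8 with Galois group isomorphic to the dihedral group D₄ of order 8; and rank_n Cl(K) ≥ 7. -/

import Mathlib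

open Polynomial NumberField

/-- `M` contains a subgroup isomorphic to `(ℤ/nℤ)^s`, i.e. `rank_n M ≥ s`. -/
def HasZModRankGE (M : Type*) [CommGroup M] (n s : ℕ) : Prop :=
  ∃ φ : (Multiplicative (Fin s → ZMod n)) →* M, Function.Injective φ

/-- A number field (here a subfield of `ℂ`) is totally imaginary if none of its complex
embeddings takes only real values. -/
def TotallyImaginary (K : Type*) [Field K] : Prop :=
  ∀ φ : K →+* ℂ, ∃ x : K, (φ x).im ≠ 0

/-- Criterion for a commutative group to have large `n`-rank. -/
theorem rank_criterion {M : Type*} [CommGroup M] (n s : ℕ) (hn : 1 < n) (c : Fin s → M)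
    (hc : ∀ i, c i ^ n = 1)
    (h : ∀ p : ℕ, p.Prime → p ∣ n → ∀ e : Fin s → ℕ, ∏ i, (c i ^ (n / p)) ^ e i = 1 →
      ∀ i, p ∣ e i) : HasZModRankGE M n s := by
  have hn0 : NeZero n := ⟨by omega⟩
  have key : ∀ (x y : ℕ) (i : Fin s), x ≡ y [MOD n] → c i ^ x = c i ^ y := by
    intro x y i hxy
    exact pow_eq_pow_iff_modEq.mpr (hxy.of_dvd (orderOf_dvd_of_pow_eq_one (hc i)))
  let φ : Multiplicative (Fin s → ZMod n) →* M :=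
    { toFun := fun v => ∏ i, c i ^ ((Multiplicative.toAdd v) i).val
      map_one' := by simp
      map_mul' := by
        intro v w
        rw [← Finset.prod_mul_distrib]
        refine Finset.prod_congr rfl fun i _ => ?_
        rw [← pow_add]
        apply key
        simp only [toAdd_mul, Pi.add_apply, ZMod.val_add]
        exact Nat.mod_modEq _ _ }
  refine ⟨φ, ?_⟩
  rw [injective_iff_map_eq_one]
  intro v hv
  by_contra hne
  -- take a prime dividing the order of `v`
  have hvn : v ^ n = 1 := by
    apply Multiplicative.toAdd.injective
    funext i
    simp
  have ho : orderOf v ≠ 1 := by rwa [Ne, orderOf_eq_one_iff]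
  obtain ⟨p, hp, hpd⟩ := Nat.exists_prime_and_dvd ho
  have hon : orderOf v ∣ n := orderOf_dvd_of_pow_eq_one hvn
  have hpn : p ∣ n := hpd.trans hon
  obtain ⟨k, hk⟩ := hpd
  set w := v ^ k with hw
  have hwp : w ^ p = 1 := by rw [hw, ← pow_mul, mul_comm, ← hk, pow_orderOf_eq_one]
  have hw1 : w ≠ 1 := by
    intro h1
    have := orderOf_dvd_of_pow_eq_one (hw ▸ h1 : v ^ k = 1)
    rw [hk] at this
    have ho0 : 0 < orderOf v := Nat.pos_of_dvd_of_pos hon (by omega)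
    have hk0 : 0 < k := by
      rcases Nat.eq_zero_or_pos k with h0 | h0
      · subst h0; omega
      · exact h0
    have := Nat.le_of_dvd hk0 this
    have := hp.two_le
    nlinarith
  have hφw : φ w = 1 := by rw [hw, map_pow, hv, one_pow]
  obtain ⟨m, hm⟩ := hpn
  have hm0 : 0 < m := by
    rcases Nat.eq_zero_or_pos m with h0 | h0
    · subst h0; omega
    · exact h0
  -- each coordinate of `w` is divisible by `n / p`
  have hdiv : ∀ i, m ∣ ((Multiplicative.toAdd w) i).val := by
    intro i
    have h1 : (p : ZMod n) * (Multiplicative.toAdd w) i = 0 := by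
      have := congrArg (fun z => (Multiplicative.toAdd z) i) hwp
      simpa using this
    have h2 : ((p * ((Multiplicative.toAdd w) i).val : ℕ) : ZMod n) = 0 := by
      push_cast
      rw [ZMod.natCast_zmod_val]
      exact h1
    rw [ZMod.natCast_eq_zero_iff] at h2
    have h2' : p * m ∣ p * ((Multiplicative.toAdd w) i).val := hm ▸ h2
    exact Nat.dvd_of_mul_dvd_mul_left hp.pos h2'
  choose e he using hdiv
  have hmn : n / p = m := by rw [hm]; exact Nat.mul_div_cancel_left _ hp.pos
  have h3 := h p hp ⟨m, hm⟩ e (by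
    rw [hmn, ← hφw]
    refine Finset.prod_congr rfl fun i _ => ?_
    rw [← pow_mul, ← he i])
  apply hw1
  apply Multiplicative.toAdd.injective
  funext i
  obtain ⟨t, ht⟩ := h3 i
  have h4 : n ∣ ((Multiplicative.toAdd w) i).val := by
    rw [he i, ht]; exact ⟨t, by rw [← mul_assoc, mul_comm m p, ← hm]⟩
  have h5 := Nat.eq_zero_of_dvd_of_lt h4 (ZMod.val_lt _)
  simpa [ZMod.val_eq_zero] using h5

/-- The sum of the reciprocals of the primes congruent to `1` modulo `p` diverges. -/
theorem not_summable_one_div_primes_one_mod (p : ℕ) (hp : 0 < p) :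
    ¬ Summable (fun n : ℕ => if n.Prime ∧ (n : ZMod p) = 1 then (1 : ℝ) / n else 0) := by
  intro hg
  have : NeZero p := ⟨hp.ne'⟩
  set g : ℕ → ℝ := fun n : ℕ => if n.Prime ∧ (n : ZMod p) = 1 then (1 : ℝ) / n else 0 with hgdef
  have hg0 : ∀ n, 0 ≤ g n := by
    intro n; simp only [hgdef]; split_ifs <;> positivity
  obtain ⟨C, hC⟩ := ArithmeticFunction.vonMangoldt.LSeries_residueClass_lower_bound
    (q := p) (a := 1) isUnit_one
  have hD := ArithmeticFunction.vonMangoldt.summable_residueClass_non_primes_div (q := p) (a := 1)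
  set D : ℕ → ℝ := fun n : ℕ ↦
    (if n.Prime then 0 else ArithmeticFunction.vonMangoldt.residueClass (1 : ZMod p) n) / n
    with hDdef
  have hφ : 0 < (p.totient : ℝ)⁻¹ := inv_pos.mpr (mod_cast p.totient.pos_of_neZero)
  set c := (p.totient : ℝ)⁻¹
  obtain ⟨s, hs⟩ : ∃ s : Finset ℕ, ∑' n, g n - c / 2 < ∑ n ∈ s, g n := by
    have := hg.hasSum.eventually_const_lt (show ∑' n, g n - c / 2 < ∑' n, g n by linarith)
    exact this.exists
  set E : ℕ → ℝ := fun n => if n ∈ s then Real.log n else 0 with hEdef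
  have hE : Summable E := summable_of_ne_finset_zero (s := s) (by
    intro b hb; simp [hEdef, hb])
  set T : ℕ → ℝ := fun n => if n ∈ s then 0 else g n with hTdef
  have hT : HasSum T (∑' n, g n - ∑ n ∈ s, g n) := by
    have h1 : HasSum (fun n => if n ∈ s then g n else 0) (∑ n ∈ s, g n) := by
      have := hasSum_sum_of_ne_finset_zero (L := .unconditional ℕ) (f := fun n => if n ∈ s then g n else 0) (s := s)
        (by intro b hb; simp [hb])
      convert this using 1
      exact Finset.sum_congr rfl (by intro x hx; simp [hx])
    have h2 := hg.hasSum.sub h1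
    have h3 : (fun n => g n - if n ∈ s then g n else 0) = T := by
      funext n
      simp only [hTdef]
      split_ifs <;> simp
    rw [h3] at h2
    exact h2
  have hTle : ∑' n, T n ≤ c / 2 := by rw [hT.tsum_eq]; linarith
  have key : ∀ u : ℝ, 0 < u → u ≤ 1 → c / u - C ≤ ∑' n, D n + ∑' n, E n + (1 / u) * (c / 2) := by
    intro u hu hu1
    have h1 := hC (x := 1 + u) ⟨by linarith, by linarith⟩
    rw [add_sub_cancel_left] at h1
    have h2 : ∑' n : ℕ, ArithmeticFunction.vonMangoldt.residueClass (1 : ZMod p) n / (n : ℝ) ^ (1 + u)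
        ≤ ∑' n, (D n + E n + (1 / u) * T n) := by
      refine Summable.tsum_le_tsum (fun n => ?_) ?_ ((hD.add hE).add (hT.summable.mul_left _))
      · have hT0 : 0 ≤ T n := by simp only [hTdef]; split_ifs; exacts [le_rfl, hg0 n]
        have hE0 : 0 ≤ E n := by
          simp only [hEdef]; split_ifs; exacts [Real.log_natCast_nonneg n, le_rfl]
        have hrc := ArithmeticFunction.vonMangoldt.residueClass_nonneg (1 : ZMod p) n
        rcases Nat.eq_zero_or_pos n with rfl | hn
        · have : 0 ≤ D 0 := by simp [hDdef]
          simp only [ArithmeticFunction.vonMangoldt.residueClass_apply_zero, zero_div]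
          positivity
        have hn1 : (1 : ℝ) ≤ n := by exact_mod_cast hn
        have hnx : (n : ℝ) ≤ (n : ℝ) ^ (1 + u) := by
          conv_lhs => rw [← Real.rpow_one (n : ℝ)]
          exact Real.rpow_le_rpow_of_exponent_le hn1 (by linarith)
        by_cases hpr : n.Prime
        · have hD0 : D n = 0 := by simp [hDdef, hpr]
          rw [hD0, zero_add]
          by_cases hcl : (n : ZMod p) = 1
          · have hval : ArithmeticFunction.vonMangoldt.residueClass (1 : ZMod p) n
                = Real.log n := by
              rw [ArithmeticFunction.vonMangoldt.residueClass, Set.indicator_of_mem (by exact hcl),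
                ArithmeticFunction.vonMangoldt_apply_prime hpr]
            rw [hval]
            by_cases hns : n ∈ s
            · have : E n = Real.log n := by simp [hEdef, hns]
              rw [this]
              have h3 : Real.log n / (n : ℝ) ^ (1 + u) ≤ Real.log n :=
                div_le_self (Real.log_natCast_nonneg n) (hn1.trans hnx)
              have : 0 ≤ 1 / u * T n := by positivity
              linarith
            · have : T n = 1 / n := by simp [hTdef, hns, hgdef, hpr, hcl]
              rw [this]
              have hlog : Real.log n ≤ (n : ℝ) ^ u / u := Real.log_le_rpow_div (by positivity) hu
              have h4 : Real.log n / (n : ℝ) ^ (1 + u) ≤ 1 / u * (1 / n) := by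
                rw [Real.rpow_add (by positivity), Real.rpow_one]
                have hnu : 0 < (n : ℝ) ^ u := by positivity
                rw [div_le_iff₀ (by positivity)]
                calc Real.log n ≤ (n : ℝ) ^ u / u := hlog
                  _ = _ := by field_simp
              linarith
          · have hval : ArithmeticFunction.vonMangoldt.residueClass (1 : ZMod p) n = 0 := by
              rw [ArithmeticFunction.vonMangoldt.residueClass,
                Set.indicator_of_notMem (by exact hcl)]
            rw [hval, zero_div]
            positivity
        · have : D n = ArithmeticFunction.vonMangoldt.residueClass (1 : ZMod p) n / n := by
            simp [hDdef, hpr]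
          rw [this]
          have h5 : ArithmeticFunction.vonMangoldt.residueClass (1 : ZMod p) n / (n : ℝ) ^ (1 + u) ≤
              ArithmeticFunction.vonMangoldt.residueClass (1 : ZMod p) n / n :=
            div_le_div_of_nonneg_left hrc (by positivity) hnx
          have : 0 ≤ 1 / u * T n := by positivity
          linarith
      · exact LSeries.summable_real_of_abscissaOfAbsConv_lt <|
          (ArithmeticFunction.vonMangoldt.abscissaOfAbsConv_residueClass_le_one (1 : ZMod p)).trans_lt
            (by norm_cast; linarith)
    rw [(hD.add hE).tsum_add (hT.summable.mul_left _), hD.tsum_add hE, tsum_mul_left] at h2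
    have : (1 / u) * ∑' n, T n ≤ (1 / u) * (c / 2) := by gcongr
    linarith
  set B := ∑' n, D n + ∑' n, E n + C
  have hB : ∀ u : ℝ, 0 < u → u ≤ 1 → c / 2 ≤ B * u := by
    intro u hu hu1
    have := key u hu hu1
    have h6 : c / u - 1 / u * (c / 2) ≤ B := by linarith
    have h7 : c / u - 1 / u * (c / 2) = c / 2 / u := by field_simp; ring
    rw [h7, div_le_iff₀ hu] at h6
    exact h6
  have hBpos : 0 < B := by
    have := hB 1 one_pos le_rfl
    linarith
  have hu : 0 < min 1 (c / (4 * B)) := by positivity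
  have h8 := hB _ hu (min_le_left _ _)
  have h9 : B * min 1 (c / (4 * B)) ≤ B * (c / (4 * B)) := by
    gcongr; exact min_le_right _ _
  have h10 : B * (c / (4 * B)) = c / 4 := by field_simp
  linarith

/-- If (almost) every prime `q` is the norm of a prime ideal, then the primes having two such
prime ideals have a convergent sum of reciprocals. -/
theorem summable_of_two_primes (K : Type*) [Field K] [NumberField K] (W : ℕ) (hW : 0 < W)
    (Q Q' : ℕ → Ideal (𝓞 K)) (A : Set ℕ) [DecidablePred (· ∈ A)]
    (hQ : ∀ q : ℕ, q.Prime → ¬ q ∣ W → (Q q).IsPrime ∧ Ideal.absNorm (Q q) = q)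
    (hA : ∀ q ∈ A, q.Prime ∧ ¬ q ∣ W ∧ (Q' q).IsPrime ∧ Ideal.absNorm (Q' q) = q ∧ Q' q ≠ Q q) :
    Summable (fun n : ℕ => if n ∈ A then (1 : ℝ) / n else 0) := by
  have hlim := NumberField.Ideal.tendsto_norm_le_div_atTop K
  set ρ := ((2 ^ InfinitePlace.nrRealPlaces K * (2 * Real.pi) ^ InfinitePlace.nrComplexPlaces K *
    Units.regulator K * classNumber K) / (Units.torsionOrder K * Real.sqrt |discr K|) : ℝ)
  let I : ℕ → Ideal (𝓞 K) := fun m => (m.primeFactorsList.map Q).prod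
  have hInorm : ∀ m : ℕ, m ≠ 0 → m.Coprime W → Ideal.absNorm (I m) = m := by
    intro m hm hmW
    simp only [I]
    rw [map_list_prod, List.map_map]
    conv_rhs => rw [← Nat.prod_primeFactorsList hm]
    congr 1
    nth_rw 2 [← List.map_id m.primeFactorsList]
    refine List.map_congr_left fun l hl => ?_
    have hlp := Nat.prime_of_mem_primeFactorsList hl
    have hlm := Nat.dvd_of_mem_primeFactorsList hl
    refine (hQ l hlp fun hlW => ?_).2
    exact hlp.one_lt.ne' (Nat.dvd_one.mp (hmW ▸ Nat.dvd_gcd hlm hlW))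
  -- the key injectivity
  have hinj : ∀ m m' q q' : ℕ, m ≠ 0 → m' ≠ 0 → m.Coprime W → m'.Coprime W → q ∈ A → q' ∈ A →
      I m * Q' q = I m' * Q' q' → q = q' ∧ m = m' := by
    intro m m' q q' hm hm' hmW hmW' hq hq' h
    obtain ⟨hqp, hqW, hqpr, hqn, hqne⟩ := hA q hq
    obtain ⟨hqp', hqW', hqpr', hqn', hqne'⟩ := hA q' hq'
    have hle : ∀ l : ℕ, l.Prime → ∀ J : Ideal (𝓞 K), J.IsPrime → Ideal.absNorm J = l →
        J ≤ Q' q → J = Q' q := by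
      intro l hl J hJ hJl hle
      have hJ0 : J ≠ ⊥ := by
        rintro rfl
        rw [Ideal.absNorm_bot] at hJl
        exact hl.ne_zero hJl.symm
      exact (hJ.isMaximal hJ0).eq_of_le hqpr.ne_top hle
    have hqq : q = q' := by
      have h1 : I m' * Q' q' ≤ Q' q := h ▸ Ideal.mul_le_right
      rcases (Ideal.IsPrime.mul_le hqpr).mp h1 with h2 | h2
      · exfalso
        have h3 : ∃ l ∈ m'.primeFactorsList, Q l ≤ Q' q := by
          have : ∀ L : List ℕ, (L.map Q).prod ≤ Q' q → ∃ l ∈ L, Q l ≤ Q' q := by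
            intro L
            induction L with
            | nil =>
              intro h0
              simp only [List.map_nil, List.prod_nil, Ideal.one_eq_top, top_le_iff] at h0
              exact absurd h0 hqpr.ne_top
            | cons x L ih =>
              intro h0
              rw [List.map_cons, List.prod_cons, Ideal.IsPrime.mul_le hqpr] at h0
              rcases h0 with h0 | h0
              · exact ⟨x, by simp, h0⟩
              · obtain ⟨l, hl, hl'⟩ := ih h0
                exact ⟨l, by simp [hl], hl'⟩
          exact this _ h2
        obtain ⟨l, hl, hl'⟩ := h3
        have hlp := Nat.prime_of_mem_primeFactorsList hl
        have hlm := Nat.dvd_of_mem_primeFactorsList hl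
        obtain ⟨hp1, hp2⟩ := hQ l hlp fun hlW =>
          hlp.one_lt.ne' (Nat.dvd_one.mp (hmW' ▸ Nat.dvd_gcd hlm hlW))
        have := hle l hlp _ hp1 hp2 hl'
        have hlq : l = q := by rw [← hp2, this, hqn]
        subst hlq
        exact hqne this.symm
      · have := hle q' hqp' _ hqpr' hqn' h2
        rw [← hqn, ← this, hqn']
    refine ⟨hqq, ?_⟩
    subst hqq
    have := congrArg Ideal.absNorm h
    rw [map_mul, map_mul, hInorm m hm hmW, hInorm m' hm' hmW', hqn] at this
    exact Nat.eq_of_mul_eq_mul_right hqp.pos this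
  have hcount : ∀ T : Finset ℕ, (∀ q ∈ T, q ∈ A) → ∀ X : ℝ, 0 < X →
      ∑ q ∈ T, (X / (q * W) - 1) ≤ (Nat.card {I : Ideal (𝓞 K) // Ideal.absNorm I ≤ X} : ℝ) := by
    intro T hT X hX
    let Z : Finset (Σ _ : ℕ, ℕ) := T.sigma fun q => Finset.range ⌊X / (q * W)⌋₊
    have hfin : Finite {I : Ideal (𝓞 K) // Ideal.absNorm I ≤ X} := by
      have := Ideal.finite_setOfPred_absNorm_le (S := 𝓞 K) ⌊X⌋₊
      have h2 : {I : Ideal (𝓞 K) | (Ideal.absNorm I : ℝ) ≤ X} =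
          {I : Ideal (𝓞 K) | Ideal.absNorm I ≤ ⌊X⌋₊} := by
        ext I; simp [Nat.le_floor_iff hX.le]
      exact (h2 ▸ this : {I : Ideal (𝓞 K) | (Ideal.absNorm I : ℝ) ≤ X}.Finite).to_subtype
    have hcop : ∀ k, (1 + k * W).Coprime W := by intro k; simp
    have hmem : ∀ z ∈ Z, (Ideal.absNorm (I (1 + z.2 * W) * Q' z.1) : ℝ) ≤ X := by
      rintro ⟨q, k⟩ hz
      simp only [Z, Finset.mem_sigma, Finset.mem_range] at hz
      obtain ⟨hq, hk⟩ := hz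
      obtain ⟨hqp, hqW, hqpr, hqn, hqne⟩ := hA q (hT q hq)
      rw [map_mul, hInorm _ (by omega) (hcop k), hqn]
      have h1 : (((k + 1 : ℕ)) : ℝ) ≤ X / (q * W) := by
        rw [← Nat.le_floor_iff (by positivity)]; omega
      have hq0 : (0 : ℝ) < q := by exact_mod_cast hqp.pos
      have hW0 : (1 : ℝ) ≤ W := by exact_mod_cast hW
      rw [le_div_iff₀ (by positivity)] at h1
      push_cast at h1 ⊢
      nlinarith
    have hcard : Z.card ≤ Nat.card {I : Ideal (𝓞 K) // Ideal.absNorm I ≤ X} := by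
      rw [← Nat.card_eq_finsetCard Z]
      refine Nat.card_le_card_of_injective
        (fun z : Z => (⟨I (1 + z.1.2 * W) * Q' z.1.1, hmem z.1 z.2⟩ :
          {I : Ideal (𝓞 K) // Ideal.absNorm I ≤ X})) ?_
      rintro ⟨⟨q, k⟩, hz⟩ ⟨⟨q', k'⟩, hz'⟩ h
      have h' := congrArg Subtype.val h
      simp only at h'
      simp only [Z, Finset.mem_sigma, Finset.mem_range] at hz hz'
      obtain ⟨h1, h2⟩ := hinj _ _ q q' (by omega) (by omega) (hcop k) (hcop k') (hT q hz.1)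
        (hT q' hz'.1) h'
      have h3 : k = k' := Nat.eq_of_mul_eq_mul_right hW (by omega)
      subst h1 h3
      rfl
    have h1 : (Z.card : ℝ) = ∑ q ∈ T, (⌊X / (q * W)⌋₊ : ℝ) := by
      simp [Z, Finset.card_sigma]
    calc ∑ q ∈ T, (X / (q * W) - 1) ≤ ∑ q ∈ T, (⌊X / (q * W)⌋₊ : ℝ) :=
          Finset.sum_le_sum fun q _ => (Nat.sub_one_lt_floor _).le
      _ = Z.card := h1.symm
      _ ≤ _ := by exact_mod_cast hcard
  have hbound : ∀ T : Finset ℕ, (∀ q ∈ T, q ∈ A) → ∑ q ∈ T, (1 : ℝ) / (q * W) ≤ ρ := by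
    intro T hT
    have hl2 : Filter.Tendsto (fun X : ℝ => ∑ q ∈ T, (1 : ℝ) / (q * W) - T.card / X) Filter.atTop
        (nhds (∑ q ∈ T, (1 : ℝ) / (q * W) - 0)) :=
      tendsto_const_nhds.sub (tendsto_const_nhds.div_atTop Filter.tendsto_id)
    rw [sub_zero] at hl2
    refine le_of_tendsto_of_tendsto hl2 hlim ?_
    filter_upwards [Filter.eventually_gt_atTop 0] with X hX
    rw [le_div_iff₀ hX]
    refine le_trans (le_of_eq ?_) (hcount T hT X hX)
    rw [Finset.sum_sub_distrib, sub_mul, Finset.sum_mul]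
    congr 1
    · exact Finset.sum_congr rfl fun q _ => by ring
    · simp; field_simp
  refine summable_of_sum_le (c := ρ * W) (fun n => by split_ifs <;> positivity) fun u => ?_
  rw [← Finset.sum_filter]
  have := hbound (u.filter (· ∈ A)) (by simp)
  have hW0 : (0 : ℝ) < W := by exact_mod_cast hW
  calc ∑ a ∈ u with a ∈ A, (1 : ℝ) / a = (∑ a ∈ u with a ∈ A, (1 : ℝ) / (a * W)) * W := by
        rw [Finset.sum_mul]; exact Finset.sum_congr rfl fun q _ => by field_simp
    _ ≤ ρ * W := by gcongr

lemma exists_padicInt_hom {K : Type*} [Field K] [NumberField K] (q : ℕ) [Fact q.Prime]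
    (φ : K →+* ℚ_[q]) : ∃ ψ : 𝓞 K →+* ℤ_[q], ∀ x : 𝓞 K, ((ψ x : ℤ_[q]) : ℚ_[q]) = φ (x : K) := by
  have key : ∀ x : 𝓞 K, ∃ z : ℤ_[q], (z : ℚ_[q]) = φ (x : K) := by
    intro x
    have h1 : IsIntegral ℤ (x : K) := x.2
    have h2 : IsIntegral ℤ (φ (x : K)) := h1.map φ.toIntAlgHom
    have h3 : IsIntegral ℤ_[q] (φ (x : K)) := h2.tower_top
    obtain ⟨z, hz⟩ := (IsIntegrallyClosed.isIntegral_iff (R := ℤ_[q]) (K := ℚ_[q])).1 h3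
    exact ⟨z, hz⟩
  choose f hf using key
  refine ⟨{ toFun := f, map_one' := ?_, map_mul' := ?_, map_zero' := ?_, map_add' := ?_ }, hf⟩
  · apply Subtype.coe_injective; simpa using hf 1
  · intro x y; apply Subtype.coe_injective
    have := hf (x * y)
    simp only [map_mul] at this
    simp [this, hf]
  · apply Subtype.coe_injective; simpa using hf 0
  · intro x y; apply Subtype.coe_injective
    have := hf (x + y)
    simp only [map_add] at this
    simp [this, hf]

lemma absNorm_ker {K : Type*} [Field K] [NumberField K] (q : ℕ) [Fact q.Prime]
    (ρ : 𝓞 K →+* ZMod q) : (RingHom.ker ρ).IsPrime ∧ Ideal.absNorm (RingHom.ker ρ) = q := by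
  refine ⟨RingHom.ker_isPrime ρ, ?_⟩
  have e := RingHom.quotientKerEquivOfSurjective (ZMod.ringHom_surjective ρ)
  rw [Ideal.absNorm_apply, Submodule.cardQuot_apply]
  exact (Nat.card_congr e.toEquiv).trans (by simp)

lemma exists_embedding (α : ℂ) (hα : IsIntegral ℚ α) (q : ℕ) [Fact q.Prime] (r : ℚ_[q])
    (hr : aeval r (minpoly ℚ α) = 0) :
    ∃ φ : IntermediateField.adjoin ℚ {α} →ₐ[ℚ] ℚ_[q],
      φ (IntermediateField.AdjoinSimple.gen ℚ α) = r := by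
  have hm : r ∈ (minpoly ℚ α).aroots ℚ_[q] := by
    rw [mem_aroots]
    exact ⟨minpoly.ne_zero hα, hr⟩
  exact ⟨(IntermediateField.algHomAdjoinIntegralEquiv ℚ hα).symm ⟨r, hm⟩,
    IntermediateField.algHomAdjoinIntegralEquiv_symm_apply_gen ℚ hα ⟨r, hm⟩⟩

lemma pow_hensel (p q : ℕ) [Fact q.Prime] (B : ℕ) (b : ZMod q) (hb : b ^ p = B)
    (hp : ¬ q ∣ p) (hB : ¬ q ∣ B) (hp0 : 0 < p) :
    ∃ z : ℤ_[q], z ^ p = B ∧ PadicInt.toZMod z = b := by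
  have hq : q.Prime := Fact.out
  have hval : PadicInt.toZMod ((b.val : ℕ) : ℤ_[q]) = b := by simp
  have hker : ∀ x : ℤ_[q], ‖x‖ < 1 ↔ PadicInt.toZMod x = 0 := by
    intro x
    rw [← RingHom.mem_ker, PadicInt.ker_toZMod, PadicInt.maximalIdeal_eq_span_p,
      Ideal.mem_span_singleton, PadicInt.norm_lt_one_iff_dvd]
  have h1 : ‖aeval ((b.val : ℕ) : ℤ_[q]) (X ^ p - C ((B : ℕ) : ℤ_[q]))‖ < 1 := by
    rw [hker]; simp [hb]
  have hb0 : b ≠ 0 := by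
    rintro rfl
    rw [zero_pow hp0.ne'] at hb
    exact hB ((ZMod.natCast_eq_zero_iff _ _).1 hb.symm)
  have h2 : ‖aeval ((b.val : ℕ) : ℤ_[q]) (derivative (X ^ p - C ((B : ℕ) : ℤ_[q])))‖ = 1 := by
    refine le_antisymm (PadicInt.norm_le_one _) (not_lt.1 ?_)
    rw [hker]
    have hpz : (p : ZMod q) ≠ 0 := fun h => hp ((ZMod.natCast_eq_zero_iff _ _).1 h)
    simp [derivative_X_pow, hpz, hb0]
  obtain ⟨z, hz, hz2, -⟩ := hensels_lemma (F := X ^ p - C ((B : ℕ) : ℤ_[q]))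
    (a := ((b.val : ℕ) : ℤ_[q])) (by rw [h2]; simpa using h1)
  refine ⟨z, ?_, ?_⟩
  · simpa [sub_eq_zero] using hz
  · rw [h2, hker, map_sub, hval, sub_eq_zero] at hz2
    exact hz2

lemma NR_ideal (p : ℕ) (hp : p.Prime) (B : ℕ) (hB : 0 < B) (hpow : ∀ x : ℚ, x ^ p ≠ B)
    (θ : ℂ) (hθ : θ ^ p = B) [NumberField (IntermediateField.adjoin ℚ {θ})] :
    ∃ t : 𝓞 (IntermediateField.adjoin ℚ {θ}), ∀ (q : ℕ) (_ : Fact q.Prime) (b : ZMod q),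
      b ^ p = B → ¬ q ∣ p → ¬ q ∣ B →
      ∃ I : Ideal (𝓞 (IntermediateField.adjoin ℚ {θ})), I.IsPrime ∧ Ideal.absNorm I = q ∧
        ∀ m : ℕ, t - m ∈ I ↔ (m : ZMod q) = b := by
  have hirr : Irreducible (X ^ p - C (B : ℚ)) := X_pow_sub_C_irreducible_of_prime hp hpow
  have hmin : minpoly ℚ θ = X ^ p - C (B : ℚ) := by
    symm
    refine minpoly.eq_of_irreducible_of_monic hirr (by simp [hθ]) (monic_X_pow_sub_C _ hp.ne_zero)
  have hαintZ : IsIntegral ℤ θ := by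
    refine ⟨X ^ p - C (B : ℤ), monic_X_pow_sub_C _ hp.ne_zero, by simp [hθ]⟩
  have hαint : IsIntegral ℚ θ := hαintZ.tower_top
  have hgen : IsIntegral ℤ (IntermediateField.AdjoinSimple.gen ℚ θ) := by
    refine (isIntegral_algHom_iff (IntermediateField.val _).toIntAlgHom
      (IntermediateField.val (IntermediateField.adjoin ℚ {θ})).injective).1 ?_
    simpa using hαintZ
  let t : 𝓞 (IntermediateField.adjoin ℚ {θ}) := ⟨IntermediateField.AdjoinSimple.gen ℚ θ, hgen⟩
  refine ⟨t, ?_⟩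
  intro q _ b hb hqp hqB
  obtain ⟨z, hz, hzb⟩ := pow_hensel p q B b hb hqp hqB hp.pos
  obtain ⟨φ, hφ⟩ := exists_embedding θ hαint q (z : ℚ_[q]) (by
    rw [hmin]
    have : ((z ^ p : ℤ_[q]) : ℚ_[q]) = B := by rw [hz]; simp
    simp at this
    simp [this])
  obtain ⟨ψ, hψ⟩ := exists_padicInt_hom q φ.toRingHom
  have hψt : ψ t = z := by
    apply Subtype.coe_injective
    exact (hψ t).trans hφ
  have := absNorm_ker q ((PadicInt.toZMod).comp ψ)
  refine ⟨_, this.1, this.2, ?_⟩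
  intro m
  rw [RingHom.mem_ker]
  simp only [RingHom.comp_apply, map_sub, hψt, hzb, map_natCast]
  rw [sub_eq_zero, eq_comm]

lemma NR_core (p : ℕ) (hp : p.Prime) (B : ℕ) (hB : 0 < B) (hpow : ∀ x : ℚ, x ^ p ≠ B) (N : ℕ) :
    ∃ q, N < q ∧ q.Prime ∧ ∀ x : ZMod q, x ^ p ≠ B := by
  classical
  by_contra hcon
  push Not at hcon
  obtain ⟨θ, hθ⟩ := IsAlgClosed.exists_pow_nat_eq (B : ℂ) hp.pos
  have hαintZ : IsIntegral ℤ θ := by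
    refine ⟨X ^ p - C (B : ℤ), monic_X_pow_sub_C _ hp.ne_zero, by simp [hθ]⟩
  have hαint : IsIntegral ℚ θ := hαintZ.tower_top
  have : FiniteDimensional ℚ (IntermediateField.adjoin ℚ {θ}) :=
    IntermediateField.adjoin.finiteDimensional hαint
  have : NumberField (IntermediateField.adjoin ℚ {θ}) := ⟨⟩
  obtain ⟨t, ht⟩ := NR_ideal p hp B hB hpow θ hθ
  set W := (N + p + B).factorial with hW
  have hWpos : 0 < W := Nat.factorial_pos _
  have hbig : ∀ q : ℕ, q.Prime → ¬ q ∣ W → N + p + B < q := by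
    intro q hq h
    by_contra h'
    exact h (Nat.dvd_factorial hq.pos (not_lt.1 h'))
  have hbig2 : ∀ q : ℕ, q.Prime → ¬ q ∣ W → N < q ∧ ¬ q ∣ p ∧ ¬ q ∣ B := by
    intro q hq h
    have := hbig q hq h
    refine ⟨by omega, fun h => ?_, fun h => ?_⟩
    · have := Nat.le_of_dvd hp.pos h; omega
    · have := Nat.le_of_dvd hB h; omega
  have h1 : ∀ q : ℕ, ∃ I : Ideal (𝓞 (IntermediateField.adjoin ℚ {θ})), ∃ b : ZMod q,
      q.Prime → ¬ q ∣ W →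
      b ^ p = B ∧ I.IsPrime ∧ Ideal.absNorm I = q ∧ ∀ m : ℕ, t - m ∈ I ↔ (m : ZMod q) = b := by
    intro q
    by_cases hq : q.Prime ∧ ¬ q ∣ W
    · obtain ⟨h1, h2, h3⟩ := hbig2 q hq.1 hq.2
      obtain ⟨b, hb⟩ := hcon q h1 hq.1
      obtain ⟨I, hI⟩ := ht q ⟨hq.1⟩ b hb h2 h3
      exact ⟨I, b, fun _ _ => ⟨hb, hI⟩⟩
    · exact ⟨⊥, 0, fun h1 h2 => (hq ⟨h1, h2⟩).elim⟩
  choose Q b hQ using h1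
  have h2 : ∀ q : ℕ, ∃ I : Ideal (𝓞 (IntermediateField.adjoin ℚ {θ})),
      q.Prime → ¬ q ∣ W → (q : ZMod p) = 1 →
      I.IsPrime ∧ Ideal.absNorm I = q ∧ I ≠ Q q := by
    intro q
    by_cases hq : q.Prime ∧ ¬ q ∣ W ∧ (q : ZMod p) = 1
    · obtain ⟨hq1, hq2, hq3⟩ := hq
      obtain ⟨h1, h2, h3⟩ := hbig2 q hq1 hq2
      have : Fact q.Prime := ⟨hq1⟩
      have : Fact p.Prime := ⟨hp⟩
      obtain ⟨k1, k2, k3, k4⟩ := hQ q hq1 hq2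
      have hdvd : p ∣ Fintype.card (ZMod q)ˣ := by
        rw [ZMod.card_units]
        have : ((q - 1 : ℕ) : ZMod p) = 0 := by
          rw [Nat.cast_sub hq1.one_lt.le, hq3]; simp
        exact (ZMod.natCast_eq_zero_iff _ _).1 this
      obtain ⟨ζ, hζ⟩ := exists_prime_orderOf_dvd_card p hdvd
      have hζ1 : ζ ≠ 1 := by
        rintro rfl
        simp at hζ
        exact hp.one_lt.ne hζ
      have hζp : (ζ : ZMod q) ^ p = 1 := by
        rw [← Units.val_pow_eq_pow_val, ← hζ, pow_orderOf_eq_one]; rfl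
      have hb0 : b q ≠ 0 := by
        intro h
        rw [h, zero_pow hp.ne_zero] at k1
        exact h3 ((ZMod.natCast_eq_zero_iff _ _).1 k1.symm)
      obtain ⟨I, i1, i2, i3⟩ := ht q ⟨hq1⟩ (b q * ζ) (by rw [mul_pow, hζp, k1, mul_one]) h2 h3
      refine ⟨I, fun _ _ _ => ⟨i1, i2, ?_⟩⟩
      rintro rfl
      have e1 := (k4 (b q).val).2 (by simp)
      have e2 := (i3 (b q).val).1 e1
      simp only [ZMod.natCast_val, ZMod.cast_id', id_eq] at e2
      apply hζ1
      ext
      exact (mul_left_cancel₀ hb0 (by rw [Units.val_one, mul_one]; exact e2)).symm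
    · exact ⟨⊥, fun h1 h2 h3 => (hq ⟨h1, h2, h3⟩).elim⟩
  choose Q' hQ' using h2
  have hs := summable_of_two_primes (IntermediateField.adjoin ℚ {θ}) W hWpos Q Q'
    {q | q.Prime ∧ ¬ q ∣ W ∧ (q : ZMod p) = 1}
    (fun q h1 h2 => ⟨(hQ q h1 h2).2.1, (hQ q h1 h2).2.2.1⟩)
    (fun q h => ⟨h.1, h.2.1, (hQ' q h.1 h.2.1 h.2.2).1, (hQ' q h.1 h.2.1 h.2.2).2.1,
      (hQ' q h.1 h.2.1 h.2.2).2.2⟩)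
  apply not_summable_one_div_primes_one_mod p hp.pos
  rw [← summable_nat_add_iff (W + 1)] at hs ⊢
  refine hs.congr ?_
  intro k
  have : ¬ (k + (W + 1)) ∣ W := fun h => by have := Nat.le_of_dvd hWpos h; omega
  simp [this]

lemma not_pth_power (p : ℕ) (hp : p.Prime) (a b c d : ℕ) (ha : a < p) (hb : b < p)
    (hc : c < p) (hd : d < p) (x : ℚ) (hx : x ^ p = ((2 ^ a * 3 ^ b * 5 ^ c * 7 ^ d : ℕ) : ℚ)) :
    a = 0 ∧ b = 0 ∧ c = 0 ∧ d = 0 := by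
  have h2 : Fact (Nat.Prime 2) := ⟨by norm_num⟩
  have h3 : Fact (Nat.Prime 3) := ⟨by norm_num⟩
  have h5 : Fact (Nat.Prime 5) := ⟨by norm_num⟩
  have h7 : Fact (Nat.Prime 7) := ⟨by norm_num⟩
  have hx0 : x ≠ 0 := by
    rintro rfl
    rw [zero_pow hp.ne_zero] at hx
    have : 0 < 2 ^ a * 3 ^ b * 5 ^ c * 7 ^ d := by positivity
    have h' : (2 ^ a * 3 ^ b * 5 ^ c * 7 ^ d) = 0 := by exact_mod_cast hx.symm
    omega
  have key : ∀ (l : ℕ) (_ : Fact l.Prime) (k : ℕ), k < p →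
      padicValNat l (2 ^ a * 3 ^ b * 5 ^ c * 7 ^ d) = k → k = 0 := by
    intro l _ k hk h
    have h1 := congrArg (padicValRat l) hx
    rw [padicValRat.pow, padicValRat.of_nat, h] at h1
    have : (p : ℤ) ∣ (k : ℤ) := ⟨_, h1.symm⟩
    exact Nat.eq_zero_of_dvd_of_lt (by exact_mod_cast this) hk
  have hv : ∀ (l : ℕ) (_ : Fact l.Prime), padicValNat l (2 ^ a * 3 ^ b * 5 ^ c * 7 ^ d) =
      a * padicValNat l 2 + b * padicValNat l 3 + c * padicValNat l 5 + d * padicValNat l 7 := by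
    intro l _
    rw [padicValNat.mul (by positivity) (by positivity), padicValNat.mul (by positivity) (by positivity),
      padicValNat.mul (by positivity) (by positivity), padicValNat.pow,
      padicValNat.pow, padicValNat.pow, padicValNat.pow]
  have e : ∀ (l m : ℕ), ¬ l ∣ m → padicValNat l m = 0 := fun l m h =>
    padicValNat.eq_zero_of_not_dvd h
  refine ⟨key 2 h2 a ha ?_, key 3 h3 b hb ?_, key 5 h5 c hc ?_, key 7 h7 d hd ?_⟩
  · rw [hv 2 h2, e 2 3 (by norm_num), e 2 5 (by norm_num), e 2 7 (by norm_num)]; simp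
  · rw [hv 3 h3, e 3 2 (by norm_num), e 3 5 (by norm_num), e 3 7 (by norm_num)]; simp
  · rw [hv 5 h5, e 5 2 (by norm_num), e 5 3 (by norm_num), e 5 7 (by norm_num)]; simp
  · rw [hv 7 h7, e 7 2 (by norm_num), e 7 3 (by norm_num), e 7 5 (by norm_num)]; simp

/-- The numbers `2, 3, 5, 7` are independent modulo `p`-th powers locally at the primes
dividing `y`. -/
def GoodAt (p y : ℕ) : Prop :=
  ∀ a b c d : ℤ, (∀ (q : ℕ) (_ : Fact q.Prime), 7 < q → q ∣ y →
    ∃ x : ZMod q, (2 : ZMod q) ^ a * 3 ^ b * 5 ^ c * 7 ^ d = x ^ p) →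
    (p : ℤ) ∣ a ∧ (p : ℤ) ∣ b ∧ (p : ℤ) ∣ c ∧ (p : ℤ) ∣ d

lemma exists_qf : ∃ qf : ℕ → ℕ → ℕ → ℕ → ℕ → ℕ, ∀ p a b c d, (qf p a b c d).Prime ∧
    1000 < qf p a b c d ∧ (p.Prime → a < p → b < p → c < p → d < p →
      ¬ (a = 0 ∧ b = 0 ∧ c = 0 ∧ d = 0) →
      ∀ x : ZMod (qf p a b c d), x ^ p ≠ ((2 ^ a * 3 ^ b * 5 ^ c * 7 ^ d : ℕ) : ZMod (qf p a b c d))) := by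
  have : ∀ p a b c d : ℕ, ∃ q : ℕ, q.Prime ∧
    1000 < q ∧ (p.Prime → a < p → b < p → c < p → d < p →
      ¬ (a = 0 ∧ b = 0 ∧ c = 0 ∧ d = 0) →
      ∀ x : ZMod q, x ^ p ≠ ((2 ^ a * 3 ^ b * 5 ^ c * 7 ^ d : ℕ) : ZMod q)) := by
    intro p a b c d
    by_cases h : p.Prime ∧ a < p ∧ b < p ∧ c < p ∧ d < p ∧ ¬ (a = 0 ∧ b = 0 ∧ c = 0 ∧ d = 0)
    · obtain ⟨hp, ha, hb, hc, hd, h0⟩ := h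
      obtain ⟨q, hq1, hq2, hq3⟩ := NR_core p hp (2 ^ a * 3 ^ b * 5 ^ c * 7 ^ d) (by positivity)
        (fun x hx => h0 (not_pth_power p hp a b c d ha hb hc hd x hx)) 1000
      exact ⟨q, hq2, hq1, fun _ _ _ _ _ _ => hq3⟩
    · obtain ⟨q, hq1, hq2⟩ := Nat.exists_infinite_primes 1001
      exact ⟨q, hq2, by omega, fun h1 h2 h3 h4 h5 h6 => (h ⟨h1, h2, h3, h4, h5, h6⟩).elim⟩
  choose qf hqf using this
  exact ⟨qf, hqf⟩

lemma exists_Q (n : ℕ) (hn : 1 < n) (hn6 : Nat.Coprime n 6) : ∃ Q q0 : ℕ, 1000 < Q ∧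
    (∀ l, l.Prime → l ∣ Q → 1000 < l) ∧ q0.Prime ∧ 7 < q0 ∧ q0 ∣ Q ∧ q0 % n = 2 ∧
    ∀ y, Q ∣ y → ∀ p, p.Prime → p ∣ n → GoodAt p y := by
  obtain ⟨qf, hqf⟩ := exists_qf
  have hn2 : 2 < n := by
    rcases Nat.lt_or_ge 2 n with h | h
    · exact h
    · interval_cases n; revert hn6; decide
  have hn0 : NeZero n := ⟨by omega⟩
  have hu : IsUnit (2 : ZMod n) := by
    have : IsUnit ((2 : ℕ) : ZMod n) := by
      rw [ZMod.isUnit_iff_coprime]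
      exact (Nat.Coprime.coprime_dvd_right (by norm_num) hn6).symm
    simpa using this
  obtain ⟨q0, hq0, hq0p, hq0n⟩ := Nat.forall_exists_prime_gt_and_eq_mod hu 1000
  have hq0n' : q0 % n = 2 := by
    have : ((q0 : ℕ) : ZMod n) = ((2 : ℕ) : ZMod n) := by simpa using hq0n
    rw [ZMod.natCast_eq_natCast_iff'] at this
    rw [this, Nat.mod_eq_of_lt hn2]
  set R := ∏ p ∈ n.primeFactors, ∏ a ∈ Finset.range p, ∏ b ∈ Finset.range p,
    ∏ c ∈ Finset.range p, ∏ d ∈ Finset.range p, qf p a b c d with hR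
  have hRl : ∀ l, l.Prime → l ∣ R → 1000 < l := by
    intro l hl h
    rw [hR, Prime.dvd_finsetProd_iff hl.prime] at h
    obtain ⟨p, -, h⟩ := h
    rw [Prime.dvd_finsetProd_iff hl.prime] at h
    obtain ⟨a, -, h⟩ := h
    rw [Prime.dvd_finsetProd_iff hl.prime] at h
    obtain ⟨b, -, h⟩ := h
    rw [Prime.dvd_finsetProd_iff hl.prime] at h
    obtain ⟨c, -, h⟩ := h
    rw [Prime.dvd_finsetProd_iff hl.prime] at h
    obtain ⟨d, -, h⟩ := h
    rw [(Nat.prime_dvd_prime_iff_eq hl (hqf p a b c d).1).1 h]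
    exact (hqf p a b c d).2.1
  have hRpos : 0 < R := by
    refine Finset.prod_pos fun p _ => Finset.prod_pos fun a _ => Finset.prod_pos fun b _ =>
      Finset.prod_pos fun c _ => Finset.prod_pos fun d _ => (hqf p a b c d).1.pos
  refine ⟨q0 * R, q0, by nlinarith, ?_, hq0p, by omega, dvd_mul_right _ _, hq0n', ?_⟩
  · intro l hl h
    rcases (Nat.Prime.dvd_mul hl).1 h with h | h
    · rw [(Nat.prime_dvd_prime_iff_eq hl hq0p).1 h]; exact hq0
    · exact hRl l hl h
  · intro y hy p hp hpn a b c d h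
    have hp0 : (0 : ℤ) < p := by exact_mod_cast hp.pos
    have hdecomp : ∀ a : ℤ, ∃ (a' : ℕ) (k : ℤ), a' < p ∧ a = a' + p * k := by
      intro a
      refine ⟨(a % p).toNat, a / p, ?_, ?_⟩
      · have := Int.emod_lt_of_pos a hp0
        have := Int.emod_nonneg a hp0.ne'
        omega
      · rw [Int.toNat_of_nonneg (Int.emod_nonneg a hp0.ne'), Int.emod_add_mul_ediv]
    obtain ⟨a', ka, ha, rfl⟩ := hdecomp a
    obtain ⟨b', kb, hb, rfl⟩ := hdecomp b
    obtain ⟨c', kc, hc, rfl⟩ := hdecomp c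
    obtain ⟨d', kd, hd, rfl⟩ := hdecomp d
    by_cases h0 : a' = 0 ∧ b' = 0 ∧ c' = 0 ∧ d' = 0
    · obtain ⟨rfl, rfl, rfl, rfl⟩ := h0
      simp
    · exfalso
      obtain ⟨h1, h2, h3⟩ := hqf p a' b' c' d'
      have h3 := h3 hp ha hb hc hd h0
      set q := qf p a' b' c' d' with hq
      have : Fact q.Prime := ⟨h1⟩
      have hqR : q ∣ R := by
        rw [hR]
        refine dvd_trans ?_ (Finset.dvd_prod_of_mem _ (Nat.mem_primeFactors.2 ⟨hp, hpn, by omega⟩))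
        refine dvd_trans ?_ (Finset.dvd_prod_of_mem _ (Finset.mem_range.2 ha))
        refine dvd_trans ?_ (Finset.dvd_prod_of_mem _ (Finset.mem_range.2 hb))
        refine dvd_trans ?_ (Finset.dvd_prod_of_mem _ (Finset.mem_range.2 hc))
        exact (Finset.dvd_prod_of_mem _ (Finset.mem_range.2 hd))
      obtain ⟨x, hx⟩ := h q ⟨h1⟩ (by omega) (dvd_trans (dvd_mul_of_dvd_right hqR _) hy)
      have hne : ∀ m : ℕ, 0 < m → m < 1000 → (m : ZMod q) ≠ 0 := by
        intro m hm hm' h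
        have := Nat.le_of_dvd hm ((ZMod.natCast_eq_zero_iff _ _).1 h)
        omega
      have n2 : (2 : ZMod q) ≠ 0 := by simpa using hne 2 (by norm_num) (by norm_num)
      have n3 : (3 : ZMod q) ≠ 0 := by simpa using hne 3 (by norm_num) (by norm_num)
      have n5 : (5 : ZMod q) ≠ 0 := by simpa using hne 5 (by norm_num) (by norm_num)
      have n7 : (7 : ZMod q) ≠ 0 := by simpa using hne 7 (by norm_num) (by norm_num)
      set u : ZMod q := 2 ^ ka * 3 ^ kb * 5 ^ kc * 7 ^ kd with hu
      have hu0 : u ≠ 0 := by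
        simp only [hu]
        exact mul_ne_zero (mul_ne_zero (mul_ne_zero (zpow_ne_zero _ n2) (zpow_ne_zero _ n3))
          (zpow_ne_zero _ n5)) (zpow_ne_zero _ n7)
      apply h3 (x / u)
      rw [div_pow, ← hx, div_eq_iff (pow_ne_zero _ hu0), hu]
      rw [zpow_add₀ n2, zpow_add₀ n3, zpow_add₀ n5, zpow_add₀ n7, mul_comm (p : ℤ) ka,
        mul_comm (p : ℤ) kb, mul_comm (p : ℤ) kc, mul_comm (p : ℤ) kd, zpow_mul, zpow_mul, zpow_mul,
        zpow_mul]
      simp only [zpow_natCast, mul_pow]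
      push_cast
      ring

lemma exists_t (n : ℕ) (l : ℕ) (hl : l.Prime) (hn : 1 < n) (hln : l % n = 2) (hl7 : 7 < l)
    (hnl : n < l) : ∃ t : ℕ, (l : ℤ) ∣ (t : ℤ) ^ n - 49 ∧ ¬ (l : ℤ) ^ 2 ∣ (t : ℤ) ^ n - 49 := by
  have : Fact l.Prime := ⟨hl⟩
  have hcop : (Nat.card (ZMod l)ˣ).Coprime n := by
    rw [Nat.card_eq_fintype_card, ZMod.card_units]
    have h1 : l = n * (l / n) + 2 := by
      have := Nat.div_add_mod l n
      omega
    have h2 : l - 1 = n * (l / n) + 1 := by omega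
    rw [h2]
    simp
  have h7 : (7 : ZMod l) ≠ 0 := by
    intro h
    have h' : ((7 : ℕ) : ZMod l) = 0 := by simpa using h
    have := Nat.le_of_dvd (by norm_num) ((ZMod.natCast_eq_zero_iff _ _).1 h')
    omega
  have h49 : (49 : ZMod l) ≠ 0 := by
    have : (49 : ZMod l) = 7 * 7 := by norm_num
    rw [this]; exact mul_ne_zero h7 h7
  obtain ⟨u, hu⟩ := (powCoprime hcop).surjective (Units.mk0 49 h49)
  have hu' : (u : ZMod l) ^ n = 49 := by
    have := congrArg (fun v : (ZMod l)ˣ => (v : ZMod l)) hu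
    simpa using this
  set t0 : ℕ := (u : ZMod l).val with ht0
  have ht0' : (t0 : ZMod l) = u := by simp [ht0]
  have hd : ∀ t : ℕ, (t : ZMod l) = u → (l : ℤ) ∣ (t : ℤ) ^ n - 49 := by
    intro t ht
    rw [← ZMod.intCast_zmod_eq_zero_iff_dvd] 
    push_cast
    rw [ht, hu', sub_self]
  by_cases hsq : (l : ℤ) ^ 2 ∣ (t0 : ℤ) ^ n - 49
  · refine ⟨t0 + l, hd _ (by simp [ht0']), ?_⟩
    intro h
    obtain ⟨k, hk⟩ := Polynomial.powAddExpansion (t0 : ℤ) (l : ℤ) n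
    push_cast at h
    rw [hk] at h
    have h1 : (l : ℤ) ^ 2 ∣ n * (t0 : ℤ) ^ (n - 1) * l := by
      have h2 := dvd_sub (dvd_sub h hsq) (dvd_mul_left ((l : ℤ) ^ 2) k)
      have h3 : (n * (t0 : ℤ) ^ (n - 1) * l) = (t0 : ℤ) ^ n + n * (t0 : ℤ) ^ (n - 1) * l + k * l ^ 2
        - 49 - ((t0 : ℤ) ^ n - 49) - k * l ^ 2 := by ring
      rw [h3]; exact h2
    have hl0 : (l : ℤ) ≠ 0 := by exact_mod_cast hl.ne_zero
    rw [sq, mul_dvd_mul_iff_right hl0] at h1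
    have hlp : _root_.Prime (l : ℤ) := Nat.prime_iff_prime_int.1 hl
    rcases hlp.dvd_or_dvd h1 with h1 | h1
    · have := Nat.le_of_dvd (by omega) (Int.natCast_dvd_natCast.1 h1)
      omega
    · have h1 := hlp.dvd_of_dvd_pow h1
      rw [Int.natCast_dvd_natCast, ← ZMod.natCast_eq_zero_iff, ht0'] at h1
      exact u.ne_zero h1
  · exact ⟨t0, hd t0 ht0', hsq⟩

lemma exists_y (n : ℕ) (hn : 1 < n) (hn6 : Nat.Coprime n 6) (Q : ℕ) (hQ : 1000 < Q)
    (hQl : ∀ l, l.Prime → l ∣ Q → 1000 < l) (N c : ℕ) :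
    ∃ y l : ℕ, Q ∣ y ∧ 0 < y ∧ y % 144 = c % 144 ∧ y % 35 = 1 ∧ l.Prime ∧ N < l ∧
      (l : ℤ) ∣ (y : ℤ) ^ n - 49 ∧ ¬ (l : ℤ) ^ 2 ∣ (y : ℤ) ^ n - 49 := by
  have hn2 : 2 < n := by
    rcases Nat.lt_or_ge 2 n with h | h
    · exact h
    · interval_cases n; revert hn6; decide
  have hn0 : NeZero n := ⟨by omega⟩
  have hu : IsUnit (2 : ZMod n) := by
    have : IsUnit ((2 : ℕ) : ZMod n) := by
      rw [ZMod.isUnit_iff_coprime]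
      exact (Nat.Coprime.coprime_dvd_right (by norm_num) hn6).symm
    simpa using this
  obtain ⟨l, hl, hlp, hln⟩ := Nat.forall_exists_prime_gt_and_eq_mod hu (N + Q + n + 1000)
  have hln' : l % n = 2 := by
    have : ((l : ℕ) : ZMod n) = ((2 : ℕ) : ZMod n) := by simpa using hln
    rw [ZMod.natCast_eq_natCast_iff'] at this
    rw [this, Nat.mod_eq_of_lt hn2]
  obtain ⟨t, ht1, ht2⟩ := exists_t n l hlp hn hln' (by omega) (by omega)
  have cop : ∀ m : ℕ, 0 < m → m < l → Nat.Coprime m (l ^ 2) := by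
    intro m h1 h2
    refine Nat.Coprime.pow_right 2 ?_
    exact ((Nat.Prime.coprime_iff_not_dvd hlp).2 fun h => by
      have := Nat.le_of_dvd h1 h
      omega).symm
  have copQ : ∀ m : ℕ, (∀ k, k.Prime → k ∣ m → k < 1000) → Nat.Coprime m Q := by
    intro m hm
    refine Nat.Coprime.symm (Nat.Coprime.symm (Nat.coprime_of_dvd ?_))
    intro k hk h1 h2
    exact absurd (hm k hk h1) (not_lt.2 (hQl k hk h2).le)
  have c1 : Nat.Coprime 144 35 := by decide
  have c2 : Nat.Coprime (144 * 35) Q := by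
    apply copQ
    intro k hk h
    have : k ∣ 2 ^ 4 * 3 ^ 2 * 5 * 7 := by simpa using h
    rcases (Nat.Prime.dvd_mul hk).1 this with h | h
    · rcases (Nat.Prime.dvd_mul hk).1 h with h | h
      · rcases (Nat.Prime.dvd_mul hk).1 h with h | h
        · have := Nat.le_of_dvd (by norm_num) (hk.dvd_of_dvd_pow h); omega
        · have := Nat.le_of_dvd (by norm_num) (hk.dvd_of_dvd_pow h); omega
      · have := Nat.le_of_dvd (by norm_num) h; omega
    · have := Nat.le_of_dvd (by norm_num) h; omega
  have c3 : Nat.Coprime (144 * 35 * Q) (l ^ 2) := by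
    refine Nat.Coprime.mul_left (Nat.Coprime.mul_left (cop _ (by norm_num) (by omega)) (cop _ (by norm_num) (by omega)))
      (cop _ (by omega) (by omega))
  obtain ⟨y1, hy1, hy1'⟩ := Nat.chineseRemainder c1 c 1
  obtain ⟨y2, hy2, hy2'⟩ := Nat.chineseRemainder c2 y1 0
  obtain ⟨y, hy, hy'⟩ := Nat.chineseRemainder c3 y2 t
  have e1 : y ≡ c [MOD 144] := by
    have a1 : y ≡ y2 [MOD 144] := (hy.of_dvd (by rw [mul_assoc]; exact dvd_mul_right _ _))
    have a2 : y2 ≡ y1 [MOD 144] := hy2.of_dvd (dvd_mul_right _ _)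
    exact a1.trans (a2.trans hy1)
  have e2 : y ≡ 1 [MOD 35] := by
    have a1 : y ≡ y2 [MOD 35] := (hy.of_dvd (dvd_mul_of_dvd_left (dvd_mul_left _ _) _))
    have a2 : y2 ≡ y1 [MOD 35] := hy2.of_dvd (dvd_mul_left _ _)
    exact a1.trans (a2.trans hy1')
  have e3 : y ≡ 0 [MOD Q] := (hy.of_dvd (dvd_mul_left _ _)).trans hy2'
  have e4 : (l : ℤ) ^ 2 ∣ (y : ℤ) ^ n - (t : ℤ) ^ n := by
    have := (Nat.modEq_iff_dvd.1 hy'.symm)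
    push_cast at this
    exact dvd_trans this (sub_dvd_pow_sub_pow _ _ _)
  refine ⟨y, l, (Nat.modEq_zero_iff_dvd.1 e3), ?_, e1, e2, hlp, by omega, ?_, ?_⟩
  · rcases Nat.eq_zero_or_pos y with h | h
    · subst h; revert e2; decide
    · exact h
  · have := dvd_add (dvd_trans (dvd_pow_self _ two_ne_zero) e4) ht1
    have h3 : (y : ℤ) ^ n - 49 = (y : ℤ) ^ n - t ^ n + (t ^ n - 49) := by ring
    rw [h3]; exact this
  · intro h
    apply ht2
    have := dvd_sub h e4
    have h3 : (t : ℤ) ^ n - 49 = (y : ℤ) ^ n - 49 - (y ^ n - t ^ n) := by ring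
    rw [h3]; exact this

/-- The polynomial function `x⁸ + 4 A x⁶ - (8 A - 14) x⁴ + 4 A x² + 1`. -/
def pf {F : Type*} [Field F] (A x : F) : F :=
  x ^ 8 + 4 * A * x ^ 6 - (8 * A - 14) * x ^ 4 + 4 * A * x ^ 2 + 1

/-- The eight roots in terms of one of them. -/
def rts {F : Type*} [Field F] (x : F) : Fin 8 → F :=
  ![x, -x, 1 / x, -(1 / x), (x - 1) / (x + 1), -((x - 1) / (x + 1)),
    (x + 1) / (x - 1), -((x + 1) / (x - 1))]

lemma map_rts {F E : Type*} [Field F] [Field E] (f : F →+* E) (x : F) (i : Fin 8) :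
    f (rts x i) = rts (f x) i := by
  fin_cases i <;> simp [rts]

lemma pf_ne {F : Type*} [Field F] [CharZero F] (A x : F) (h : pf A x = 0) :
    x ≠ 0 ∧ x - 1 ≠ 0 ∧ x + 1 ≠ 0 := by
  unfold pf at h
  refine ⟨?_, ?_, ?_⟩
  · rintro rfl; norm_num at h
  · intro hx
    have : x = 1 := by linear_combination hx
    subst this
    have : (16 : F) = 0 := by linear_combination h
    norm_num at this
  · intro hx
    have : x = -1 := by linear_combination hx
    subst this
    have : (16 : F) = 0 := by linear_combination h
    norm_num at this

lemma prod_rts {F : Type*} [Field F] [CharZero F] (A x : F) (h : pf A x = 0) (T : F) :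
    ∏ i, (T - rts x i) = pf A T := by
  obtain ⟨h0, h1, h2⟩ := pf_ne A x h
  set w := x ^ 2 + (1 / x) ^ 2 with hw
  set w' := ((x - 1) / (x + 1)) ^ 2 + ((x + 1) / (x - 1)) ^ 2 with hw'
  have e1 : w + w' = -4 * A := by
    rw [hw, hw']
    unfold pf at h
    field_simp
    linear_combination h
  have e2 : w * w' = 12 - 8 * A := by
    rw [hw, hw']
    unfold pf at h
    field_simp
    linear_combination (2:F) * h
  have e3 : (T - x) * (T - -x) * (T - 1 / x) * (T - -(1 / x)) = T ^ 4 - w * T ^ 2 + 1 := by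
    rw [hw]; field_simp; ring
  have e4 : (T - (x - 1) / (x + 1)) * (T - -((x - 1) / (x + 1))) * (T - (x + 1) / (x - 1)) *
      (T - -((x + 1) / (x - 1))) = T ^ 4 - w' * T ^ 2 + 1 := by
    rw [hw']; field_simp; ring
  rw [Fin.prod_univ_eight]
  simp only [rts, Matrix.cons_val]
  unfold pf
  have : ∀ a b c d e f g k : F, a * b * c * d * e * f * g * k = (a * b * c * d) * (e * f * g * k) := by
    intros; ring
  rw [this, e3, e4]
  linear_combination (T ^ 4) * e2 - (T ^ 6 + T ^ 2) * e1

lemma pf_rts {F : Type*} [Field F] [CharZero F] (A x : F) (h : pf A x = 0) (i : Fin 8) :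
    pf A (rts x i) = 0 := by
  rw [← prod_rts A x h, Finset.prod_eq_zero (Finset.mem_univ i)]
  simp

lemma eq_rts {F : Type*} [Field F] [CharZero F] (A x : F) (h : pf A x = 0) (T : F)
    (hT : pf A T = 0) : ∃ i, T = rts x i := by
  rw [← prod_rts A x h, Finset.prod_eq_zero_iff] at hT
  obtain ⟨i, -, hi⟩ := hT
  exact ⟨i, sub_eq_zero.1 hi⟩

/-- auxiliary element -/
def mu {F : Type*} [Field F] (x : F) : F := (x ^ 2 - 1) / (2 * x)

lemma mu_rts {F : Type*} [Field F] [CharZero F] (A x : F) (h : pf A x = 0) (i : Fin 8) :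
    mu (rts x i) = (![mu x, - mu x, - mu x, mu x, - (mu x)⁻¹, (mu x)⁻¹, (mu x)⁻¹, -(mu x)⁻¹] : Fin 8 → F) i := by
  obtain ⟨h0, h1, h2⟩ := pf_ne A x h
  have h3 : x ^ 2 - 1 ≠ 0 := by
    have : x ^ 2 - 1 = (x - 1) * (x + 1) := by ring
    rw [this]; exact mul_ne_zero h1 h2
  fin_cases i <;> simp [rts, mu] <;> field_simp <;> ring

lemma mu_ne {F : Type*} [Field F] [CharZero F] (A x : F) (h : pf A x = 0) : mu x ≠ 0 := by
  obtain ⟨h0, h1, h2⟩ := pf_ne A x h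
  have h3 : x ^ 2 - 1 ≠ 0 := by
    have : x ^ 2 - 1 = (x - 1) * (x + 1) := by ring
    rw [this]; exact mul_ne_zero h1 h2
  unfold mu
  exact div_ne_zero h3 (mul_ne_zero two_ne_zero h0)

lemma s1_sq {F : Type*} [Field F] [CharZero F] (A x : F) (h : pf A x = 0) :
    (mu x + (mu x)⁻¹) ^ 2 = 1 - A := by
  obtain ⟨h0, h1, h2⟩ := pf_ne A x h
  have h3 : x ^ 2 - 1 ≠ 0 := by
    have : x ^ 2 - 1 = (x - 1) * (x + 1) := by ring
    rw [this]; exact mul_ne_zero h1 h2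
  unfold mu
  unfold pf at h
  field_simp
  linear_combination h

lemma s2_sq {F : Type*} [Field F] [CharZero F] (A x : F) (h : pf A x = 0) :
    (mu x - (mu x)⁻¹) ^ 2 = - A - 3 := by
  have := s1_sq A x h
  have h2 := mu_ne A x h
  have h3 : mu x * (mu x)⁻¹ = 1 := mul_inv_cancel₀ h2
  linear_combination this - 4 * h3

lemma dihedral_iso {G : Type*} [Group G] [Finite G] (g h : G) (hg : g ^ 4 = 1) (hg2 : g ^ 2 ≠ 1)
    (hh : h * h = 1) (hgh : h * g * h = g⁻¹) (hnot : ∀ m : ℤ, h ≠ g ^ m) (hcard : Nat.card G ≤ 8) :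
    Nat.card G = 8 ∧ Nonempty (G ≃* DihedralGroup 4) := by
  let k0 : ZMod 4 →+ Additive G := ZMod.lift 4 ⟨zmultiplesHom (Additive G) (Additive.ofMul g), by
    simp only [zmultiplesHom_apply]
    exact_mod_cast hg⟩
  let k : ZMod 4 → G := fun i => (k0 i).toMul
  have hk : ∀ m : ℤ, k (m : ZMod 4) = g ^ m := by
    intro m
    simp [k, k0, ZMod.lift_coe]
  have hex : ∀ i : ZMod 4, ∃ m : ℤ, (m : ZMod 4) = i := ZMod.intCast_surjective
  have hconj : ∀ m : ℤ, h * g ^ m * h = (g ^ m)⁻¹ := by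
    intro m
    have hi : h⁻¹ = h := inv_eq_of_mul_eq_one_left hh
    have := conj_zpow (i := m) (a := h) (b := g)
    rw [hi] at this
    rw [← this, hgh, inv_zpow]
  have hadd : ∀ i j, k (i + j) = k i * k j := by intro i j; simp [k]
  have hsub : ∀ i j, k (i - j) = k i * (k j)⁻¹ := by intro i j; simp [k, div_eq_mul_inv]
  have hck : ∀ i, h * k i * h = (k i)⁻¹ := by
    intro i; obtain ⟨m, rfl⟩ := hex i; rw [hk]; exact hconj m
  have hck2 : ∀ i, k i * h = h * (k i)⁻¹ := by
    intro i
    rw [← hck i, ← mul_assoc, ← mul_assoc, hh, one_mul]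
  have hneg : ∀ i, k (-i) = (k i)⁻¹ := by intro i; simp [k]
  have hcomm : ∀ i j, k i * k j = k j * k i := by
    intro i j; rw [← hadd, add_comm, hadd]
  let f : DihedralGroup 4 →* G := MonoidHom.mk' (fun x => match x with
      | DihedralGroup.r i => k i
      | DihedralGroup.sr i => h * k i) (by
    rintro (i | i) (j | j)
    · simp only [DihedralGroup.r_mul_r]; exact hadd i j
    · simp only [DihedralGroup.r_mul_sr]
      rw [sub_eq_add_neg, add_comm, hadd, ← mul_assoc, ← mul_assoc, hck2, hneg]
    · simp only [DihedralGroup.sr_mul_r]; rw [hadd, mul_assoc]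
    · simp only [DihedralGroup.sr_mul_sr]
      rw [sub_eq_add_neg, add_comm, hadd, hneg, ← hck i, mul_assoc (h * k i)])
  have hinj : Function.Injective f := by
    rw [injective_iff_map_eq_one]
    rintro (i | i) hi
    · have hi : k i = 1 := hi
      have h2 : g ^ 2 = k 2 := by
        have := hk 2
        exact_mod_cast this.symm
      have h22 : ∀ j : ZMod 4, j ≠ 0 → 2 = j ∨ 2 = j + j := by decide
      by_cases hi0 : i = 0
      · rw [hi0]; rfl
      · exfalso
        apply hg2
        rw [h2]
        rcases h22 i hi0 with h | h
        · rw [h, hi]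
        · rw [h, hadd, hi, one_mul]
    · exfalso
      have hi : h * k i = 1 := hi
      obtain ⟨m, rfl⟩ := hex i
      rw [hk] at hi
      apply hnot (-m)
      rw [zpow_neg]
      exact eq_inv_of_mul_eq_one_left hi
  have hc : Nat.card (DihedralGroup 4) ≤ Nat.card G := Nat.card_le_card_of_injective f hinj
  have h8 : Nat.card (DihedralGroup 4) = 8 := by rw [DihedralGroup.nat_card]
  have hG : Nat.card G = 8 := by omega
  refine ⟨hG, ⟨(MulEquiv.ofBijective f ?_).symm⟩⟩
  rw [Nat.bijective_iff_injective_and_card]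
  exact ⟨hinj, by omega⟩

/-- The defining polynomial. -/
noncomputable def PA (A : ℤ) : ℚ[X] :=
  X ^ 8 + C (4 * (A : ℚ)) * X ^ 6 - C (8 * (A : ℚ) - 14) * X ^ 4 + C (4 * (A : ℚ)) * X ^ 2 + 1

lemma PA_natDegree (A : ℤ) : (PA A).natDegree = 8 := by unfold PA; compute_degree!

lemma PA_monic (A : ℤ) : (PA A).Monic := by unfold PA; monicity!

lemma PA_aeval {K : Type*} [Field K] [Algebra ℚ K] (A : ℤ) (x : K) :
    aeval x (PA A) = pf (A : K) x := by
  simp [PA, pf]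

lemma PA_map {K : Type*} [Field K] [Algebra ℚ K] (A : ℤ) (x : K) (hx : pf (A : K) x = 0) :
    (PA A).map (algebraMap ℚ K) = ∏ i, (X - C (rts x i)) := by
  have : CharZero K := algebraRat.charZero K
  refine Polynomial.funext fun T => ?_
  rw [eval_map_algebraMap, PA_aeval, eval_prod, ← prod_rts (A : K) x hx]
  simp

lemma PA_splitting {K : Type*} [Field K] [Algebra ℚ K] (A : ℤ) (x : K) (hx : pf (A : K) x = 0)
    (hgen : Algebra.adjoin ℚ {x} = ⊤) : (PA A).IsSplittingField ℚ K := by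
  refine ⟨?_, ?_⟩
  · rw [PA_map A x hx]
    exact Polynomial.Splits.prod fun i _ => Polynomial.Splits.X_sub_C _
  · rw [eq_top_iff, ← hgen]
    apply Algebra.adjoin_mono
    rw [Set.singleton_subset_iff, mem_rootSet]
    exact ⟨(PA_monic A).ne_zero, by rw [PA_aeval, hx]⟩

lemma not_sq_neg (K : Type*) [Field K] [Algebra ℚ K] (s : K) (d : ℤ) (hd : ¬ IsSquare d)
    (hs : s ^ 2 = d) : s ∉ Set.range (algebraMap ℚ K) := by
  have : CharZero K := algebraRat.charZero K
  rintro ⟨r, rfl⟩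
  apply hd
  rw [← Rat.isSquare_intCast_iff]
  refine ⟨r, ?_⟩
  apply (algebraMap ℚ K).injective
  rw [map_mul, ← sq, hs]; simp

lemma exists_gal (K : Type*) [Field K] [Algebra ℚ K] [FiniteDimensional ℚ K] [IsGalois ℚ K]
    (s : K) (d : ℤ) (hd : ¬ IsSquare d) (hs : s ^ 2 = d) : ∃ g : K ≃ₐ[ℚ] K, g s = - s := by
  have h1 := not_sq_neg K s d hd hs
  rw [IsGalois.mem_range_algebraMap_iff_fixed] at h1
  push Not at h1
  obtain ⟨g, hg⟩ := h1
  refine ⟨g, ?_⟩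
  have h2 : (g s) ^ 2 = s ^ 2 := by rw [← map_pow, hs]; simp
  exact (sq_eq_sq_iff_eq_or_eq_neg.1 h2).resolve_left hg

lemma gal_pm {K : Type*} [Field K] [Algebra ℚ K] (g : K ≃ₐ[ℚ] K)
    (s : K) (d : ℤ) (hs : s ^ 2 = d) : g s = s ∨ g s = - s := by
  have h2 : (g s) ^ 2 = s ^ 2 := by rw [← map_pow, hs]; simp
  exact (sq_eq_sq_iff_eq_or_eq_neg.1 h2)

lemma gal_ext {K : Type*} [Field K] [Algebra ℚ K] (x : K)
    (hgen : Algebra.adjoin ℚ {x} = ⊤) (g h : K ≃ₐ[ℚ] K) (hgh : g x = h x) : g = h := by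
  have : (g : K →ₐ[ℚ] K) = (h : K →ₐ[ℚ] K) := by
    apply AlgHom.ext_of_adjoin_eq_top hgen
    intro z hz
    rw [Set.mem_singleton_iff.1 hz]; exact hgh
  ext z
  exact congrArg (fun f : K →ₐ[ℚ] K => f z) this

lemma map_pf {F E : Type*} [Field F] [Field E] (f : F →+* E) (A x : F) :
    f (pf A x) = pf (f A) (f x) := by
  simp only [pf, map_add, map_sub, map_mul, map_pow, map_one, map_ofNat]

lemma map_mu {F E : Type*} [Field F] [Field E] (f : F →+* E) (x : F) :
    f (mu x) = mu (f x) := by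
  simp only [mu, map_div₀, map_sub, map_mul, map_pow, map_one, map_ofNat]

lemma gal_x {K : Type*} [Field K] [Algebra ℚ K] (A : ℤ) (x : K) (hx : pf (A : K) x = 0)
    (g : K ≃ₐ[ℚ] K) : ∃ i, g x = rts x i := by
  have : CharZero K := algebraRat.charZero K
  refine eq_rts (A : K) x hx _ ?_
  have h1 : g (pf (A : K) x) = pf (A : K) (g x) := by
    have := map_pf (g : K →+* K) (A : K) x
    rwa [map_intCast] at this
  rw [← h1, hx, map_zero]

lemma gal_mu {K : Type*} [Field K] [Algebra ℚ K] (x : K) (g : K ≃ₐ[ℚ] K) :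
    g (mu x) = mu (g x) := map_mu (g : K →+* K) x

lemma field_struct {K : Type*} [Field K] [Algebra ℚ K] (A : ℤ) (hA : 1 < A) (x : K)
    (hx : pf (A : K) x = 0) (hgen : Algebra.adjoin ℚ {x} = ⊤) :
    Irreducible (PA A) ∧ FiniteDimensional ℚ K ∧ Module.finrank ℚ K = 8 ∧
    IsGalois ℚ K ∧ Nonempty ((K ≃ₐ[ℚ] K) ≃* DihedralGroup 4) ∧ minpoly ℚ x = PA A := by
  have : CharZero K := algebraRat.charZero K
  have hspl := PA_splitting A x hx hgen
  have hfd : FiniteDimensional ℚ K := IsSplittingField.finiteDimensional K (PA A)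
  have hnor : Normal ℚ K := Normal.of_isSplittingField (PA A)
  have hgal : IsGalois ℚ K := ⟨⟩
  have hxint : IsIntegral ℚ x := Algebra.IsIntegral.isIntegral x
  have hroot : aeval x (PA A) = 0 := by rw [PA_aeval, hx]
  have hdvd : minpoly ℚ x ∣ PA A := minpoly.dvd ℚ x hroot
  have hdeg : (minpoly ℚ x).natDegree = Module.finrank ℚ K := by
    have h1 : IntermediateField.adjoin ℚ {x} = ⊤ := by
      rw [eq_top_iff]
      intro z _
      have hz : z ∈ Algebra.adjoin ℚ {x} := by rw [hgen]; trivial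
      exact IntermediateField.algebra_adjoin_le_adjoin ℚ {x} hz
    exact (Field.primitive_element_iff_minpoly_natDegree_eq ℚ x).mp h1
  have hle : Nat.card (K ≃ₐ[ℚ] K) ≤ 8 := by
    rw [IsGalois.card_aut_eq_finrank, ← hdeg, ← PA_natDegree A]
    exact natDegree_le_of_dvd hdvd (PA_monic A).ne_zero
  set m := mu x with hm
  have hm0 : m ≠ 0 := mu_ne (A : K) x hx
  have e1 : (m + m⁻¹) ^ 2 = ((1 - A : ℤ) : K) := by rw [s1_sq (A : K) x hx]; push_cast; ring
  have e2 : (m - m⁻¹) ^ 2 = ((- A - 3 : ℤ) : K) := by rw [s2_sq (A : K) x hx]; push_cast; ring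
  have e3 : ((m + m⁻¹) * (m - m⁻¹)) ^ 2 = (((A - 1) * (A + 3) : ℤ) : K) := by
    rw [mul_pow, e1, e2]; push_cast; ring
  have n1 : ¬ IsSquare (1 - A) := by rintro ⟨r, hr⟩; nlinarith
  have n2 : ¬ IsSquare (- A - 3) := by rintro ⟨r, hr⟩; nlinarith
  have n3 : ¬ IsSquare ((A - 1) * (A + 3)) := by
    rintro ⟨r, hr⟩
    have h1 : |r| < A + 1 := abs_lt_of_sq_lt_sq (by nlinarith) (by omega)
    have h2 : |r| ^ 2 = (A - 1) * (A + 3) := by rw [sq_abs, hr]; ring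
    have h3 := abs_nonneg r
    nlinarith
  have s10 : m + m⁻¹ ≠ 0 := fun h => n1 ⟨0, by
    rw [h] at e1
    have : ((0 : ℤ) : K) = ((1 - A : ℤ) : K) := by rw [← e1]; simp
    rw [← Int.cast_injective this]; simp⟩
  have s20 : m - m⁻¹ ≠ 0 := fun h => n2 ⟨0, by
    rw [h] at e2
    have : ((0 : ℤ) : K) = ((- A - 3 : ℤ) : K) := by rw [← e2]; simp
    rw [← Int.cast_injective this]; simp⟩
  -- an element with sign pattern (-, +)
  have hg : ∃ g : K ≃ₐ[ℚ] K, g (m + m⁻¹) = - (m + m⁻¹) ∧ g (m - m⁻¹) = m - m⁻¹ := by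
    obtain ⟨g1, hg1⟩ := exists_gal K _ _ n1 e1
    rcases gal_pm g1 _ _ e2 with h | h
    · exact ⟨g1, hg1, h⟩
    obtain ⟨g2, hg2⟩ := exists_gal K _ _ n3 e3
    rw [map_mul] at hg2
    rcases gal_pm g2 _ _ e2 with h' | h'
    · refine ⟨g2, ?_, h'⟩
      rw [h'] at hg2
      apply mul_right_cancel₀ s20
      rw [hg2]; ring
    · refine ⟨g1 * g2, ?_, ?_⟩
      · rw [h'] at hg2
        have : g2 (m + m⁻¹) = m + m⁻¹ := by
          apply mul_right_cancel₀ (neg_ne_zero.2 s20)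
          rw [hg2]; ring
        rw [AlgEquiv.mul_apply, this, hg1]
      · rw [AlgEquiv.mul_apply, h', map_neg, h, neg_neg]
  obtain ⟨g, hg1, hg2⟩ := hg
  obtain ⟨h, hh⟩ := exists_gal K _ _ n2 e2
  obtain ⟨h0, hx1, hx2⟩ := pf_ne (A : K) x hx
  have two : (2 : K) ≠ 0 := two_ne_zero
  have hne : ∀ z : K, z ≠ 0 → z ≠ - z := by
    intro z hz h
    have : 2 * z = 0 := by linear_combination h
    exact (mul_ne_zero two hz) this
  have hgx : g x = (x - 1) / (x + 1) ∨ g x = -((x + 1) / (x - 1)) := by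
    obtain ⟨i, hi⟩ := gal_x A x hx g
    have hmu := mu_rts (A : K) x hx i
    rw [← hi, ← gal_mu, ← hm] at hmu
    rw [map_add, map_inv₀, hmu] at hg1
    rw [map_sub, map_inv₀, hmu] at hg2
    fin_cases i
    · exact absurd hg1 (hne _ s10)
    · have h3 : -m - (-m)⁻¹ = m - m⁻¹ := hg2
      rw [inv_neg] at h3
      exact absurd (by linear_combination -h3) (hne _ s20)
    · have h3 : -m - (-m)⁻¹ = m - m⁻¹ := hg2
      rw [inv_neg] at h3
      exact absurd (by linear_combination -h3) (hne _ s20)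
    · exact absurd hg1 (hne _ s10)
    · left; exact hi
    · have h3 : m⁻¹ + (m⁻¹)⁻¹ = - (m + m⁻¹) := hg1
      rw [inv_inv] at h3
      exact absurd (by linear_combination h3) (hne _ s10)
    · have h3 : m⁻¹ + (m⁻¹)⁻¹ = - (m + m⁻¹) := hg1
      rw [inv_inv] at h3
      exact absurd (by linear_combination h3) (hne _ s10)
    · right; exact hi
  have a1 : (x - 1) / (x + 1) - 1 = -2 / (x + 1) := by field_simp; ring
  have a2 : (x - 1) / (x + 1) + 1 = 2 * x / (x + 1) := by field_simp; ring
  have b1 : -((x + 1) / (x - 1)) - 1 = -2 * x / (x - 1) := by field_simp; ring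
  have b2 : -((x + 1) / (x - 1)) + 1 = -2 / (x - 1) := by field_simp; ring
  have c1 : -((x - 1) / (x + 1)) - 1 = -2 * x / (x + 1) := by field_simp; ring
  have c2 : -((x - 1) / (x + 1)) + 1 = 2 / (x + 1) := by field_simp; ring
  have d1 : (x + 1) / (x - 1) - 1 = 2 / (x - 1) := by field_simp; ring
  have d2 : (x + 1) / (x - 1) + 1 = 2 * x / (x - 1) := by field_simp; ring
  have hhx : ∀ h : K ≃ₐ[ℚ] K, h (m - m⁻¹) = -(m - m⁻¹) → h * h = 1 := by
    intro h hh
    obtain ⟨i, hi⟩ := gal_x A x hx h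
    have hmu := mu_rts (A : K) x hx i
    rw [← hi, ← gal_mu, ← hm] at hmu
    rw [map_sub, map_inv₀, hmu] at hh
    apply gal_ext x hgen
    rw [AlgEquiv.mul_apply, AlgEquiv.one_apply]
    fin_cases i
    · exact absurd hh (hne _ s20)
    · have hi : h x = - x := hi
      rw [hi, map_neg, hi, neg_neg]
    · have hi : h x = 1 / x := hi
      rw [hi, map_div₀, map_one, hi, one_div_one_div]
    · exact absurd hh (hne _ s20)
    · have h3 : -m⁻¹ - (-m⁻¹)⁻¹ = -(m - m⁻¹) := hh
      rw [inv_neg, inv_inv] at h3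
      exact absurd (by linear_combination h3) (hne _ s20)
    · have hi : h x = -((x - 1) / (x + 1)) := hi
      rw [hi, map_neg, map_div₀, map_sub, map_add, map_one, hi, c1, c2]
      field_simp
    · have hi : h x = (x + 1) / (x - 1) := hi
      rw [hi, map_div₀, map_sub, map_add, map_one, hi, d1, d2]
      field_simp
    · have h3 : -m⁻¹ - (-m⁻¹)⁻¹ = -(m - m⁻¹) := hh
      rw [inv_neg, inv_inv] at h3
      exact absurd (by linear_combination h3) (hne _ s20)
  have hgg : g (g x) = - (1 / x) := by
    rcases hgx with h | h
    · rw [h, map_div₀, map_sub, map_add, map_one, h, a1, a2]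
      field_simp
    · rw [h, map_neg, map_div₀, map_sub, map_add, map_one, h, b1, b2]
      field_simp
  have hg4 : g ^ 4 = 1 := by
    apply gal_ext x hgen
    have : g ^ 4 = g * g * g * g := by simp only [pow_succ, pow_zero, one_mul]
    rw [this]
    simp only [AlgEquiv.mul_apply, AlgEquiv.one_apply, hgg]
    simp only [map_neg, map_div₀, map_one, hgg]
    field_simp
  have hg22 : g ^ 2 ≠ 1 := by
    intro h
    have h1 : g (g x) = x := by
      have := congrArg (fun f : K ≃ₐ[ℚ] K => f x) h
      simpa [sq] using this
    rw [hgg] at h1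
    apply s10
    rw [hm]
    unfold mu
    have h2 : x ^ 2 = - 1 := by
      field_simp at h1
      linear_combination -h1
    rw [h2]
    field_simp
    linear_combination 4 * h2
  have hfix : ∀ k : ℤ, (g ^ k) (m - m⁻¹) = m - m⁻¹ := by
    intro k
    have h1 : g ∈ MulAction.stabilizer (K ≃ₐ[ℚ] K) (m - m⁻¹) := hg2
    exact (Subgroup.zpow_mem _ h1 k : g ^ k ∈ MulAction.stabilizer (K ≃ₐ[ℚ] K) (m - m⁻¹))
  have hghgh : (h * g) * (h * g) = 1 := by
    apply hhx
    rw [AlgEquiv.mul_apply, hg2, hh]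
  obtain ⟨hcard, hiso⟩ := dihedral_iso g h hg4 hg22 (hhx h hh)
    (eq_inv_of_mul_eq_one_left (by rw [← hghgh]; group))
    (fun k hk => hne _ s20 (by rw [← hh, hk, hfix])) hle
  rw [IsGalois.card_aut_eq_finrank] at hcard
  have hmin : minpoly ℚ x = PA A := by
    refine (eq_of_monic_of_dvd_of_natDegree_le (minpoly.monic hxint) (PA_monic A) hdvd ?_).symm
    rw [PA_natDegree, hdeg, hcard]
  exact ⟨hmin ▸ minpoly.irreducible hxint, hfd, hcard, hgal, hiso, hmin⟩

lemma tot_imag {K : Type*} [Field K] [CharZero K] (A : ℤ) (hA : 1 < A) (x : K)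
    (hx : pf (A : K) x = 0) (φ : K →+* ℂ) : (φ (mu x + (mu x)⁻¹)).im ≠ 0 := by
  intro h
  have h1 := congrArg φ (s1_sq (A : K) x hx)
  rw [map_pow] at h1
  simp only [map_sub, map_one, map_intCast] at h1
  have h2 := congrArg Complex.re h1
  rw [sq, Complex.mul_re, h] at h2
  simp at h2
  have h3 : ((A : ℤ) : ℝ) ≤ 1 := by nlinarith [mul_self_nonneg (φ (mu x + (mu x)⁻¹)).re]
  have h4 : A ≤ 1 := by exact_mod_cast h3
  omega

/-- `u` is a `q`-adic integer with residue `v`. -/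
def Red (q : ℕ) [Fact q.Prime] (u : ℚ_[q]) (v : ZMod q) : Prop :=
  ∃ z : ℤ_[q], (z : ℚ_[q]) = u ∧ PadicInt.toZMod z = v

section Red
variable {q : ℕ} [Fact q.Prime]

lemma Red.uniq {u : ℚ_[q]} {v w : ZMod q} (h : Red q u v) (h' : Red q u w) : v = w := by
  obtain ⟨z, rfl, rfl⟩ := h
  obtain ⟨z', hz, rfl⟩ := h'
  rw [Subtype.coe_injective hz]

lemma Red.add {u u' : ℚ_[q]} {v v' : ZMod q} (h : Red q u v) (h' : Red q u' v') :
    Red q (u + u') (v + v') := by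
  obtain ⟨z, rfl, rfl⟩ := h
  obtain ⟨z', rfl, rfl⟩ := h'
  exact ⟨z + z', by simp, by simp⟩

lemma Red.sub {u u' : ℚ_[q]} {v v' : ZMod q} (h : Red q u v) (h' : Red q u' v') :
    Red q (u - u') (v - v') := by
  obtain ⟨z, rfl, rfl⟩ := h
  obtain ⟨z', rfl, rfl⟩ := h'
  exact ⟨z - z', by simp, by simp⟩

lemma Red.mul {u u' : ℚ_[q]} {v v' : ZMod q} (h : Red q u v) (h' : Red q u' v') :
    Red q (u * u') (v * v') := by
  obtain ⟨z, rfl, rfl⟩ := h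
  obtain ⟨z', rfl, rfl⟩ := h'
  exact ⟨z * z', by simp, by simp⟩

lemma Red.neg {u : ℚ_[q]} {v : ZMod q} (h : Red q u v) : Red q (-u) (-v) := by
  obtain ⟨z, rfl, rfl⟩ := h
  exact ⟨-z, by simp, by simp⟩

lemma Red.pow {u : ℚ_[q]} {v : ZMod q} (h : Red q u v) (k : ℕ) : Red q (u ^ k) (v ^ k) := by
  obtain ⟨z, rfl, rfl⟩ := h
  exact ⟨z ^ k, by simp, by simp⟩

lemma Red.nat (k : ℕ) : Red q (k : ℚ_[q]) (k : ZMod q) := ⟨k, by simp, by simp⟩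

lemma Red.int (k : ℤ) : Red q (k : ℚ_[q]) (k : ZMod q) := ⟨k, by simp, by simp⟩

lemma Red.one : Red q (1 : ℚ_[q]) (1 : ZMod q) := ⟨1, by simp, by simp⟩

lemma Red.two : Red q (2 : ℚ_[q]) (2 : ZMod q) := by simpa using Red.nat (q := q) 2

lemma toZMod_eq_zero_iff (z : ℤ_[q]) : PadicInt.toZMod z = 0 ↔ ‖z‖ < 1 := by
  rw [← RingHom.mem_ker, PadicInt.ker_toZMod, PadicInt.maximalIdeal_eq_span_p,
      Ideal.mem_span_singleton, PadicInt.norm_lt_one_iff_dvd]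

lemma Red.inv {u : ℚ_[q]} {v : ZMod q} (h : Red q u v) (hv : v ≠ 0) : Red q u⁻¹ v⁻¹ := by
  obtain ⟨z, rfl, rfl⟩ := h
  have h1 : ‖z‖ = 1 := by
    refine le_antisymm (PadicInt.norm_le_one _) (not_lt.1 ?_)
    rwa [← toZMod_eq_zero_iff]
  obtain ⟨w, hw⟩ := (PadicInt.isUnit_iff.2 h1).exists_right_inv
  have hz : (z : ℚ_[q]) * w = 1 := by
    rw [← PadicInt.coe_mul, hw, PadicInt.coe_one]
  have hz2 : PadicInt.toZMod z * PadicInt.toZMod w = 1 := by rw [← map_mul, hw, map_one]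
  exact ⟨w, eq_inv_of_mul_eq_one_right hz, eq_inv_of_mul_eq_one_right hz2⟩

lemma Red.div {u u' : ℚ_[q]} {v v' : ZMod q} (h : Red q u v) (h' : Red q u' v') (hv : v' ≠ 0) :
    Red q (u / u') (v / v') := by
  rw [div_eq_mul_inv, div_eq_mul_inv]; exact h.mul (h'.inv hv)

lemma Red.zpow {u : ℚ_[q]} {v : ZMod q} (h : Red q u v) (hv : v ≠ 0) (k : ℤ) :
    Red q (u ^ k) (v ^ k) := by
  cases k with
  | ofNat k => simpa using h.pow k
  | negSucc k =>
    rw [zpow_negSucc, zpow_negSucc]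
    exact (h.pow _).inv (pow_ne_zero _ hv)

lemma Red.prod {ι : Type*} (s : Finset ι) (u : ι → ℚ_[q]) (v : ι → ZMod q)
    (h : ∀ i ∈ s, Red q (u i) (v i)) : Red q (∏ i ∈ s, u i) (∏ i ∈ s, v i) := by
  classical
  induction s using Finset.induction_on with
  | empty => simpa using Red.one
  | insert a s ha ih =>
    rw [Finset.prod_insert ha, Finset.prod_insert ha]
    exact (h a (Finset.mem_insert_self _ _)).mul (ih fun i hi => h i (Finset.mem_insert_of_mem hi))

lemma Red.root {u : ℚ_[q]} {v : ZMod q} (p : ℕ) (hp : 0 < p) (h : Red q (u ^ p) v) (hv : v ≠ 0) :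
    ∃ d : ZMod q, d ^ p = v := by
  have h' := h
  obtain ⟨z, hz, rfl⟩ := h
  have hu : ‖u‖ ≤ 1 := by
    have h1 : ‖u‖ ^ p ≤ 1 := by rw [← norm_pow, ← hz]; exact z.2
    exact (pow_le_one_iff_of_nonneg (norm_nonneg _) hp.ne').1 h1
  have h2 : Red q u (PadicInt.toZMod ⟨u, hu⟩) := ⟨⟨u, hu⟩, rfl, rfl⟩
  exact ⟨_, (h2.pow p).uniq h'⟩

lemma Red.rts {u : ℚ_[q]} {t : ZMod q} (h : Red q u t) (h0 : t ≠ 0) (h1 : t - 1 ≠ 0)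
    (h2 : t + 1 ≠ 0) (i : Fin 8) : Red q (rts u i) (rts t i) := by
  fin_cases i
  · exact h
  · exact h.neg
  · exact Red.one.div h h0
  · exact (Red.one.div h h0).neg
  · exact (h.sub Red.one).div (h.add Red.one) h2
  · exact ((h.sub Red.one).div (h.add Red.one) h2).neg
  · exact (h.add Red.one).div (h.sub Red.one) h1
  · exact ((h.add Red.one).div (h.sub Red.one) h1).neg

end Red

lemma local_residue (q : ℕ) [Fact q.Prime] (hq2 : (2 : ZMod q) ≠ 0) (p n y : ℕ) (hy : 0 < y) (A : ℤ)
    (hY : 144 * A + 481 = (y : ℤ) ^ n)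
    (hp : 0 < p) (hpn : p ∣ n) (u : ℚ_[q]) (t : ZMod q)
    (hu : pf (A : ℚ_[q]) u = 0) (hut : Red q u t) (h0 : t ≠ 0) (h1 : t - 1 ≠ 0) (h2 : t + 1 ≠ 0)
    (j : Fin 8) (hj : ∀ i, i ≠ j → rts t i - 2 ≠ 0) (e : Fin 8 → ℤ) (f1 f2 f3 : ℤ) (γ : ℚ_[q])
    (h : (∏ i, (rts u i - 2) ^ e i) * u ^ f1 * ((u + 1) / (u - 1)) ^ f2 *
      ((u - 1) ^ 2 / (2 * u)) ^ f3 = γ ^ p) :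
    ∃ d : ZMod q, d ^ p = (∏ i ∈ Finset.univ.erase j, (rts t i - 2) ^ (e i - e j)) * t ^ f1 *
      ((t + 1) / (t - 1)) ^ f2 * ((t - 1) ^ 2 / (2 * t)) ^ f3 := by
  obtain ⟨k, rfl⟩ := hpn
  have hprod : ∏ i, (rts u i - 2) = (y : ℚ_[q]) ^ (p * k) := by
    have e1 := prod_rts (A : ℚ_[q]) u hu 2
    have e2 : ∏ i, (rts u i - 2) = ∏ i, (2 - rts u i) := by
      rw [Fin.prod_univ_eight, Fin.prod_univ_eight]; ring
    rw [e2, e1]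
    have : (((144 * A + 481 : ℤ)) : ℚ_[q]) = (((y : ℤ) ^ (p * k) : ℤ) : ℚ_[q]) := by rw [hY]
    push_cast at this
    unfold pf
    rw [← this]; ring
  have hy0 : (y : ℚ_[q]) ≠ 0 := by exact_mod_cast hy.ne'
  have hb : ∀ i, rts u i - 2 ≠ 0 := by
    intro i hi
    have : ∏ i, (rts u i - 2) = 0 := Finset.prod_eq_zero (Finset.mem_univ i) hi
    rw [hprod] at this
    exact pow_ne_zero _ hy0 this
  have key : (γ / (y : ℚ_[q]) ^ (k * e j)) ^ p =
      (∏ i ∈ Finset.univ.erase j, (rts u i - 2) ^ (e i - e j)) * u ^ f1 *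
      ((u + 1) / (u - 1)) ^ f2 * ((u - 1) ^ 2 / (2 * u)) ^ f3 := by
    rw [div_pow, ← h]
    have e1 : ((y : ℚ_[q]) ^ (k * e j)) ^ p = ∏ i, (rts u i - 2) ^ e j := by
      rw [Finset.prod_zpow, hprod, ← zpow_natCast, ← zpow_mul, ← zpow_natCast, ← zpow_mul]
      congr 1; push_cast; ring
    have e2 : ∏ i ∈ Finset.univ.erase j, (rts u i - 2) ^ (e i - e j) =
        ∏ i, (rts u i - 2) ^ (e i - e j) := by
      rw [← Finset.mul_prod_erase _ _ (Finset.mem_univ j)]; simp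
    have e3 : ∏ i, (rts u i - 2) ^ (e i - e j) =
        (∏ i, (rts u i - 2) ^ e i) / ∏ i, (rts u i - 2) ^ e j := by
      rw [← Finset.prod_div_distrib]
      exact Finset.prod_congr rfl fun i _ => zpow_sub₀ (hb i) _ _
    rw [e1, e2, e3]; ring
  have hv : (∏ i ∈ Finset.univ.erase j, (rts t i - 2) ^ (e i - e j)) * t ^ f1 *
      ((t + 1) / (t - 1)) ^ f2 * ((t - 1) ^ 2 / (2 * t)) ^ f3 ≠ 0 := by
    refine mul_ne_zero (mul_ne_zero (mul_ne_zero ?_ (zpow_ne_zero _ h0))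
      (zpow_ne_zero _ (div_ne_zero h2 h1)))
      (zpow_ne_zero _ (div_ne_zero (pow_ne_zero _ h1) (mul_ne_zero hq2 h0)))
    exact Finset.prod_ne_zero_iff.2 fun i hi => zpow_ne_zero _ (hj i (Finset.ne_of_mem_erase hi))
  refine Red.root p hp (u := γ / (y : ℚ_[q]) ^ (k * e j)) ?_ hv
  rw [key]
  refine Red.mul (Red.mul (Red.mul ?_ (hut.zpow h0 _)) ?_) ?_
  · exact Red.prod _ _ _ fun i hi => ((hut.rts h0 h1 h2 i).sub Red.two).zpow
      (hj i (Finset.ne_of_mem_erase hi)) _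
  · exact ((hut.add Red.one).div (hut.sub Red.one) h1).zpow (div_ne_zero h2 h1) _
  · exact (((hut.sub Red.one).pow 2).div (Red.two.mul hut) (mul_ne_zero hq2 h0)).zpow
      (div_ne_zero (pow_ne_zero _ h1) (mul_ne_zero hq2 h0)) _

/-- `±2^a 3^b 5^c 7^d` -/
def EE {F : Type*} [Field F] (s a b c d : ℤ) : F := (-1) ^ s * 2 ^ a * 3 ^ b * 5 ^ c * 7 ^ d

lemma EE_mul {F : Type*} [Field F] (h2 : (2 : F) ≠ 0) (h3 : (3 : F) ≠ 0) (h5 : (5 : F) ≠ 0)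
    (h7 : (7 : F) ≠ 0) (s a b c d s' a' b' c' d' : ℤ) :
    (EE s a b c d : F) * EE s' a' b' c' d' = EE (s + s') (a + a') (b + b') (c + c') (d + d') := by
  unfold EE
  rw [zpow_add₀ (neg_ne_zero.2 one_ne_zero), zpow_add₀ h2, zpow_add₀ h3, zpow_add₀ h5, zpow_add₀ h7]
  ring

lemma EE_zpow {F : Type*} [Field F] (s a b c d k : ℤ) :
    (EE s a b c d : F) ^ k = EE (s * k) (a * k) (b * k) (c * k) (d * k) := by
  unfold EE
  simp only [mul_zpow, zpow_mul]

lemma EE_dvd (p y : ℕ) (hp : Odd p) (hgood : GoodAt p y) (s a b c d : ℤ)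
    (h : ∀ (q : ℕ) (_ : Fact q.Prime), 7 < q → q ∣ y → ∃ x : ZMod q, x ^ p = EE s a b c d) :
    (p : ℤ) ∣ a ∧ (p : ℤ) ∣ b ∧ (p : ℤ) ∣ c ∧ (p : ℤ) ∣ d := by
  apply hgood
  intro q hq h7 hqy
  obtain ⟨x, hx⟩ := h q hq h7 hqy
  have h1 : ((-1 : ZMod q) ^ s) ^ p = (-1) ^ s := by
    rcases Int.even_or_odd s with hs | hs
    · rw [hs.neg_one_zpow, one_pow]
    · rw [hs.neg_one_zpow, hp.neg_one_pow]
  have h2 : ((-1 : ZMod q) ^ s) * (-1) ^ s = 1 := by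
    rcases Int.even_or_odd s with hs | hs
    · rw [hs.neg_one_zpow, one_mul]
    · rw [hs.neg_one_zpow]; ring
  refine ⟨(-1) ^ s * x, ?_⟩
  rw [mul_pow, h1, hx]
  unfold EE
  linear_combination (-(2 ^ a * 3 ^ b * 5 ^ c * 7 ^ d)) * h2

lemma exists_embedding_gen {k K L : Type*} [Field k] [Field K] [Field L] [Algebra k K] [Algebra k L]
    (x : K) (hx : IsIntegral k x) (hgen : Algebra.adjoin k {x} = ⊤) (r : L)
    (hr : aeval r (minpoly k x) = 0) : ∃ φ : K →+* L, φ x = r := by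
  have h1 : IntermediateField.adjoin k {x} = ⊤ := by
    rw [eq_top_iff]
    intro z _
    have hz : z ∈ Algebra.adjoin k {x} := by rw [hgen]; trivial
    exact IntermediateField.algebra_adjoin_le_adjoin k {x} hz
  have hm : r ∈ (minpoly k x).aroots L := by
    rw [mem_aroots]
    exact ⟨minpoly.ne_zero hx, hr⟩
  let φ0 := (IntermediateField.algHomAdjoinIntegralEquiv k hx).symm ⟨r, hm⟩
  have hφ0 : φ0 (IntermediateField.AdjoinSimple.gen k x) = r :=
    IntermediateField.algHomAdjoinIntegralEquiv_symm_apply_gen k hx ⟨r, hm⟩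
  let ψ : K →+* IntermediateField.adjoin k {x} :=
    (RingHom.id K).codRestrict (IntermediateField.adjoin k {x})
      (fun z => by rw [h1]; exact IntermediateField.mem_top)
  refine ⟨φ0.toRingHom.comp ψ, ?_⟩
  have : ψ x = IntermediateField.AdjoinSimple.gen k x := by
    apply Subtype.coe_injective; rfl
  exact (congrArg φ0 this).trans hφ0

lemma exists_emb {K : Type*} [Field K] [Algebra ℚ K] (x : K) (hx : IsIntegral ℚ x)
    (hgen : Algebra.adjoin ℚ {x} = ⊤) (q : ℕ) [Fact q.Prime] (r : ℚ_[q])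
    (hr : aeval r (minpoly ℚ x) = 0) : ∃ φ : K →+* ℚ_[q], φ x = r :=
  exists_embedding_gen x hx hgen r hr

lemma zmod_ne (q : ℕ) [Fact q.Prime] (hq : 7 < q) : (2 : ZMod q) ≠ 0 ∧ (3 : ZMod q) ≠ 0 ∧
    (5 : ZMod q) ≠ 0 ∧ (7 : ZMod q) ≠ 0 := by
  have hne : ∀ m : ℕ, 0 < m → m < 8 → (m : ZMod q) ≠ 0 := by
    intro m hm hm' h
    have := Nat.le_of_dvd hm ((ZMod.natCast_eq_zero_iff _ _).1 h)
    omega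
  exact ⟨by simpa using hne 2 (by norm_num) (by norm_num),
    by simpa using hne 3 (by norm_num) (by norm_num),
    by simpa using hne 5 (by norm_num) (by norm_num),
    by simpa using hne 7 (by norm_num) (by norm_num)⟩

lemma hensel_root (q : ℕ) [Fact q.Prime] (hq : 7 < q) (n y : ℕ) (hn : 0 < n) (A : ℤ)
    (hY : 144 * A + 481 = (y : ℤ) ^ n) (hqy : q ∣ y) :
    ∃ r : ℚ_[q], pf (A : ℚ_[q]) r = 0 ∧ Red q r 2 := by
  obtain ⟨n2, n3, n5, n7⟩ := zmod_ne q hq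
  have hA : (144 : ZMod q) * A + 481 = 0 := by
    have : (((144 * A + 481 : ℤ)) : ZMod q) = (((y : ℤ) ^ n : ℤ) : ZMod q) := by rw [hY]
    push_cast at this
    rw [this, (ZMod.natCast_eq_zero_iff _ _).2 hqy, zero_pow hn.ne']
  let F : ℤ_[q][X] := X ^ 8 + C (4 * (A : ℤ_[q])) * X ^ 6 - C (8 * (A : ℤ_[q]) - 14) * X ^ 4 +
    C (4 * (A : ℤ_[q])) * X ^ 2 + 1
  have h1 : ‖aeval (2 : ℤ_[q]) F‖ < 1 := by
    rw [← toZMod_eq_zero_iff]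
    simp [F, map_ofNat]
    linear_combination hA
  have h2 : ‖aeval (2 : ℤ_[q]) (derivative F)‖ = 1 := by
    refine le_antisymm (PadicInt.norm_le_one _) (not_lt.1 ?_)
    rw [← toZMod_eq_zero_iff]
    simp [F, derivative_X_pow, map_ofNat]
    intro h
    have : (5 : ZMod q) ^ 3 * 7 = 0 := by linear_combination 11 * hA - 3 * h
    exact (mul_ne_zero (pow_ne_zero _ n5) n7) this
  obtain ⟨z, hz, hz2, -⟩ := hensels_lemma (F := F) (a := 2) (by rw [h2]; simpa using h1)
  refine ⟨z, ?_, z, rfl, ?_⟩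
  · have h3 : z ^ 8 + (4 * (A : ℤ_[q])) * z ^ 6 - (8 * (A : ℤ_[q]) - 14) * z ^ 4 +
      (4 * (A : ℤ_[q])) * z ^ 2 + 1 = 0 := by simpa [F] using hz
    have := congrArg (fun w : ℤ_[q] => (w : ℚ_[q])) h3
    unfold pf
    have h4 : ∀ k : ℕ, ((k : ℤ_[q]) : ℚ_[q]) = k := fun k => by simp
    have h44 := h4 4
    have h48 := h4 8
    have h414 := h4 14
    push_cast at this h44 h48 h414
    simpa [h44, h48, h414] using this
  · rw [h2, ← toZMod_eq_zero_iff, map_sub, sub_eq_zero] at hz2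
    rw [hz2, map_ofNat]

/-- `EE` on a vector of exponents -/
def EV {F : Type*} [Field F] (v : Fin 5 → ℤ) : F := EE (v 0) (v 1) (v 2) (v 3) (v 4)

lemma EV_zpow {F : Type*} [Field F] (v : Fin 5 → ℤ) (k : ℤ) :
    (EV v : F) ^ k = EV (fun i => v i * k) := by
  unfold EV; rw [EE_zpow]

lemma EV_mul {F : Type*} [Field F] (h2 : (2 : F) ≠ 0) (h3 : (3 : F) ≠ 0) (h5 : (5 : F) ≠ 0)
    (h7 : (7 : F) ≠ 0) (v w : Fin 5 → ℤ) : (EV v : F) * EV w = EV (fun i => v i + w i) := by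
  unfold EV; rw [EE_mul h2 h3 h5 h7]

lemma EV_ne {F : Type*} [Field F] (h2 : (2 : F) ≠ 0) (h3 : (3 : F) ≠ 0) (h5 : (5 : F) ≠ 0)
    (h7 : (7 : F) ≠ 0) (v : Fin 5 → ℤ) : (EV v : F) ≠ 0 := by
  unfold EV EE
  exact mul_ne_zero (mul_ne_zero (mul_ne_zero (mul_ne_zero
    (zpow_ne_zero _ (neg_ne_zero.2 one_ne_zero)) (zpow_ne_zero _ h2)) (zpow_ne_zero _ h3))
    (zpow_ne_zero _ h5)) (zpow_ne_zero _ h7)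

lemma EV_prod {F : Type*} [Field F] (h2 : (2 : F) ≠ 0) (h3 : (3 : F) ≠ 0) (h5 : (5 : F) ≠ 0)
    (h7 : (7 : F) ≠ 0) {ι : Type*} (s : Finset ι) (v : ι → Fin 5 → ℤ) :
    ∏ i ∈ s, (EV (v i) : F) = EV (fun k => ∑ i ∈ s, v i k) := by
  classical
  induction s using Finset.induction_on with
  | empty => simp [EV, EE]
  | insert a s ha ih =>
    rw [Finset.prod_insert ha, ih, EV_mul h2 h3 h5 h7]
    simp only [Finset.sum_insert ha]

lemma point_dvd {K : Type*} [Field K] [Algebra ℚ K] (A : ℤ) (n y p : ℕ) (hy : 0 < y) (hn : 0 < n)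
    (hY : 144 * A + 481 = (y : ℤ) ^ n) (x : K) (hxint : IsIntegral ℚ x)
    (hmin : minpoly ℚ x = PA A) (hgen : Algebra.adjoin ℚ {x} = ⊤)
    (hp : p.Prime) (hpn : p ∣ n) (hodd : Odd p) (hgood : GoodAt p y)
    (e : Fin 8 → ℤ) (f1 f2 f3 : ℤ) (γ : K)
    (h : (∏ i, (rts x i - 2) ^ e i) * x ^ f1 * ((x + 1) / (x - 1)) ^ f2 *
      ((x - 1) ^ 2 / (2 * x)) ^ f3 = γ ^ p)
    (j : Fin 8) (T : Fin 8 → Fin 5 → ℤ) (U1 U2 U3 : Fin 5 → ℤ)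
    (hT : ∀ (q : ℕ) (_ : Fact q.Prime), (2 : ZMod q) ≠ 0 → (3 : ZMod q) ≠ 0 → (5 : ZMod q) ≠ 0 →
      (7 : ZMod q) ≠ 0 → ((∀ i, i ≠ j → rts (rts (2 : ZMod q) j) i - 2 = EV (T i)) ∧
        rts (2 : ZMod q) j = EV U1 ∧ (rts (2 : ZMod q) j + 1) / (rts (2 : ZMod q) j - 1) = EV U2 ∧
        (rts (2 : ZMod q) j - 1) ^ 2 / (2 * rts (2 : ZMod q) j) = EV U3)) :
    ∀ k : Fin 5, k ≠ 0 → (p : ℤ) ∣ (∑ i ∈ Finset.univ.erase j, T i k * (e i - e j)) + U1 k * f1 +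
      U2 k * f2 + U3 k * f3 := by
  have key : ∀ (q : ℕ) (_ : Fact q.Prime), 7 < q → q ∣ y → ∃ z : ZMod q, z ^ p =
      EV (fun k => (∑ i ∈ Finset.univ.erase j, T i k * (e i - e j)) + U1 k * f1 +
      U2 k * f2 + U3 k * f3) := by
    intro q _ hq hqy
    obtain ⟨n2, n3, n5, n7⟩ := zmod_ne q hq
    obtain ⟨hT1, hU1, hU2, hU3⟩ := hT q inferInstance n2 n3 n5 n7
    obtain ⟨r, hr, hr2⟩ := hensel_root q hq n y hn A hY hqy
    have ne := fun v => EV_ne (F := ZMod q) n2 n3 n5 n7 v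
    have h0 : rts (2 : ZMod q) j ≠ 0 := hU1 ▸ ne _
    have h12 : (rts (2 : ZMod q) j + 1) / (rts (2 : ZMod q) j - 1) ≠ 0 := hU2 ▸ ne _
    rw [div_ne_zero_iff] at h12
    have hru : Red q (rts r j) (rts 2 j) := by
      refine hr2.rts n2 ?_ ?_ j
      · norm_num
      · intro h; apply n3; rw [← h]; norm_num
    have hpfu := pf_rts (A : ℚ_[q]) r hr j
    obtain ⟨φ, hφ⟩ := exists_emb x hxint hgen q (rts r j) (by rw [hmin, PA_aeval]; exact hpfu)
    have h' := congrArg φ h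
    have hm : ∀ i, φ (rts x i) = rts (rts r j) i := fun i => by rw [map_rts, hφ]
    simp only [map_mul, map_prod, map_zpow₀, map_sub, map_div₀, map_add, map_one, map_pow, map_ofNat,
      hφ, hm] at h'
    obtain ⟨d, hd⟩ := local_residue q n2 p n y hy A hY hp.pos hpn (rts r j) (rts 2 j) hpfu hru h0
      h12.2 h12.1 j (fun i hi => by rw [hT1 i hi]; exact ne _) e f1 f2 f3 (φ γ) h'
    refine ⟨d, ?_⟩
    rw [hd, hU2, hU3, Finset.prod_congr rfl (fun i hi => by
      rw [hT1 i (Finset.ne_of_mem_erase hi), EV_zpow]), EV_prod n2 n3 n5 n7, hU1, EV_zpow, EV_zpow,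
      EV_zpow, EV_mul n2 n3 n5 n7, EV_mul n2 n3 n5 n7, EV_mul n2 n3 n5 n7]
  have := EE_dvd p y hodd hgood _ _ _ _ _ key
  intro k hk
  fin_cases k
  · exact absurd rfl hk
  · exact this.1
  · exact this.2.1
  · exact this.2.2.1
  · exact this.2.2.2
lemma pt0 {F : Type*} [Field F] :
    rts (2 : F) = ![2, -2, 1/2, -1/2, 1/3, -1/3, 3, -3] := by
  have a : (2 : F) + 1 = 3 := by norm_num
  have b : (2 : F) - 1 = 1 := by norm_num
  unfold rts
  rw [a, b]
  congr! 4 <;> simp [neg_div]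

lemma pt1 {F : Type*} [Field F] :
    rts (-2 : F) = ![-2, 2, -1/2, 1/2, 3, -3, 1/3, -1/3] := by
  have a : (-2 : F) + 1 = -1 := by norm_num
  have b : (-2 : F) - 1 = -3 := by norm_num
  unfold rts
  rw [a, b]
  funext i
  fin_cases i <;> simp [neg_div, div_neg]

lemma pt2 {F : Type*} [Field F] (n2 : (2 : F) ≠ 0) (n3 : (3 : F) ≠ 0) :
    rts (1/2 : F) = ![1/2, -1/2, 2, -2, -1/3, 1/3, -3, 3] := by
  have a : (1/2 : F) + 1 = 3/2 := by field_simp; norm_num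
  have b : (1/2 : F) - 1 = -1/2 := by field_simp; norm_num
  unfold rts
  rw [a, b]
  funext i
  fin_cases i <;> simp [neg_div, div_neg] <;> field_simp

lemma pt3 {F : Type*} [Field F] (n2 : (2 : F) ≠ 0) (n3 : (3 : F) ≠ 0) :
    rts (-1/2 : F) = ![-1/2, 1/2, -2, 2, -3, 3, -1/3, 1/3] := by
  have a : (-1/2 : F) + 1 = 1/2 := by field_simp; norm_num
  have b : (-1/2 : F) - 1 = -3/2 := by field_simp; norm_num
  unfold rts
  rw [a, b]
  funext i
  fin_cases i <;> simp [neg_div, div_neg] <;> field_simp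

lemma tab0 {F : Type*} [Field F] (n2 : (2 : F) ≠ 0) (n3 : (3 : F) ≠ 0) (n5 : (5 : F) ≠ 0)
    (n7 : (7 : F) ≠ 0) :
    ((∀ i, i ≠ 0 → rts (rts (2 : F) 0) i - 2 = EV ((![![0,0,0,0,0], ![1,2,0,0,0], ![1,-1,1,0,0],
      ![1,-1,0,1,0], ![1,0,-1,1,0], ![1,0,-1,0,1], ![0,0,0,0,0], ![1,0,0,1,0]] :
      Fin 8 → Fin 5 → ℤ) i)) ∧
        rts (2 : F) 0 = EV ![0,1,0,0,0] ∧
        (rts (2 : F) 0 + 1) / (rts (2 : F) 0 - 1) = EV ![0,0,1,0,0] ∧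
        (rts (2 : F) 0 - 1) ^ 2 / (2 * rts (2 : F) 0) = EV ![0,-2,0,0,0]) := by
  have h : rts (2 : F) 0 = 2 := by simp [pt0]
  rw [h, pt0]
  refine ⟨?_, ?_, ?_, ?_⟩
  · intro i hi
    fin_cases i
    · exact absurd rfl hi
    all_goals
      simp [EV, EE]
      try field_simp
      try norm_num
  · simp [EV, EE]
  · have a : (2 : F) + 1 = 3 := by norm_num
    have b : (2 : F) - 1 = 1 := by norm_num
    simp [EV, EE, a, b]
  · have b : (2 : F) - 1 = 1 := by norm_num
    simp [EV, EE, b, zpow_neg]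
    field_simp

lemma tab1 {F : Type*} [Field F] (n2 : (2 : F) ≠ 0) (n3 : (3 : F) ≠ 0) (n5 : (5 : F) ≠ 0)
    (n7 : (7 : F) ≠ 0) :
    ((∀ i, i ≠ 1 → rts (rts (2 : F) 1) i - 2 = EV ((![![1,2,0,0,0], ![0,0,0,0,0], ![1,-1,0,1,0],
      ![1,-1,1,0,0], ![0,0,0,0,0], ![1,0,0,1,0], ![1,0,-1,1,0], ![1,0,-1,0,1]] :
      Fin 8 → Fin 5 → ℤ) i)) ∧
        rts (2 : F) 1 = EV ![1,1,0,0,0] ∧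
        (rts (2 : F) 1 + 1) / (rts (2 : F) 1 - 1) = EV ![0,0,-1,0,0] ∧
        (rts (2 : F) 1 - 1) ^ 2 / (2 * rts (2 : F) 1) = EV ![1,-2,2,0,0]) := by
  have h : rts (2 : F) 1 = -2 := by simp [pt0]
  rw [h, pt1]
  refine ⟨?_, ?_, ?_, ?_⟩
  · intro i hi
    fin_cases i
    · simp [EV, EE]; norm_num
    · exact absurd rfl hi
    all_goals
      simp [EV, EE]
      try field_simp
      try norm_num
  · simp [EV, EE]
  · have a : (-2 : F) + 1 = -1 := by norm_num
    have b : (-2 : F) - 1 = -3 := by norm_num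
    simp [EV, EE, a, b]
  · have b : (-2 : F) - 1 = -3 := by norm_num
    simp [EV, EE, b, zpow_neg]
    field_simp

lemma tab2 {F : Type*} [Field F] (n2 : (2 : F) ≠ 0) (n3 : (3 : F) ≠ 0) (n5 : (5 : F) ≠ 0)
    (n7 : (7 : F) ≠ 0) :
    ((∀ i, i ≠ 2 → rts (rts (2 : F) 2) i - 2 = EV ((![![1,-1,1,0,0], ![1,-1,0,1,0], ![0,0,0,0,0],
      ![1,2,0,0,0], ![1,0,-1,0,1], ![1,0,-1,1,0], ![1,0,0,1,0], ![0,0,0,0,0]] :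
      Fin 8 → Fin 5 → ℤ) i)) ∧
        rts (2 : F) 2 = EV ![0,-1,0,0,0] ∧
        (rts (2 : F) 2 + 1) / (rts (2 : F) 2 - 1) = EV ![1,0,1,0,0] ∧
        (rts (2 : F) 2 - 1) ^ 2 / (2 * rts (2 : F) 2) = EV ![0,-2,0,0,0]) := by
  have h : rts (2 : F) 2 = 1/2 := by simp [pt0]
  have a : (1/2 : F) + 1 = 3/2 := by field_simp; norm_num
  have b : (1/2 : F) - 1 = -1/2 := by field_simp; norm_num
  rw [h, pt2 n2 n3, a, b]
  refine ⟨?_, ?_, ?_, ?_⟩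
  · intro i hi
    fin_cases i
    on_goal 3 => exact absurd rfl hi
    all_goals
      simp [EV, EE]
      try field_simp
      try norm_num
  · simp [EV, EE]
  · simp [EV, EE]
    field_simp
  · simp [EV, EE, zpow_neg]
    field_simp

lemma tab3 {F : Type*} [Field F] (n2 : (2 : F) ≠ 0) (n3 : (3 : F) ≠ 0) (n5 : (5 : F) ≠ 0)
    (n7 : (7 : F) ≠ 0) :
    ((∀ i, i ≠ 3 → rts (rts (2 : F) 3) i - 2 = EV ((![![1,-1,0,1,0], ![1,-1,1,0,0], ![1,2,0,0,0],
      ![0,0,0,0,0], ![1,0,0,1,0], ![0,0,0,0,0], ![1,0,-1,0,1], ![1,0,-1,1,0]] :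
      Fin 8 → Fin 5 → ℤ) i)) ∧
        rts (2 : F) 3 = EV ![1,-1,0,0,0] ∧
        (rts (2 : F) 3 + 1) / (rts (2 : F) 3 - 1) = EV ![1,0,-1,0,0] ∧
        (rts (2 : F) 3 - 1) ^ 2 / (2 * rts (2 : F) 3) = EV ![1,-2,2,0,0]) := by
  have h : rts (2 : F) 3 = -1/2 := by simp [pt0]
  have a : (-1/2 : F) + 1 = 1/2 := by field_simp; norm_num
  have b : (-1/2 : F) - 1 = -3/2 := by field_simp; norm_num
  rw [h, pt3 n2 n3, a, b]
  refine ⟨?_, ?_, ?_, ?_⟩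
  · intro i hi
    fin_cases i
    on_goal 4 => exact absurd rfl hi
    all_goals
      simp [EV, EE]
      try field_simp
      try norm_num
  · simp [EV, EE]
    try field_simp
  · simp [EV, EE]
    field_simp
  · simp [EV, EE, zpow_neg]
    field_simp

lemma star {K : Type*} [Field K] [Algebra ℚ K] (A : ℤ) (n y p : ℕ) (hy : 0 < y) (hn : 0 < n)
    (hY : 144 * A + 481 = (y : ℤ) ^ n) (x : K) (hxint : IsIntegral ℚ x)
    (hmin : minpoly ℚ x = PA A) (hgen : Algebra.adjoin ℚ {x} = ⊤)
    (hp : p.Prime) (hpn : p ∣ n) (hp5 : 5 ≤ p) (hgood : GoodAt p y)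
    (e : Fin 8 → ℤ) (f1 f2 f3 : ℤ) (γ : K)
    (h : (∏ i, (rts x i - 2) ^ e i) * x ^ f1 * ((x + 1) / (x - 1)) ^ f2 *
      ((x - 1) ^ 2 / (2 * x)) ^ f3 = γ ^ p) :
    (∀ i, (p : ℤ) ∣ e i - e 7) ∧ (p : ℤ) ∣ f1 ∧ (p : ℤ) ∣ f2 ∧ (p : ℤ) ∣ f3 := by
  have hodd : Odd p := hp.odd_of_ne_two (by omega)
  have H := point_dvd A n y p hy hn hY x hxint hmin hgen hp hpn hodd hgood e f1 f2 f3 γ h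
  have k0 := H 0 _ _ _ _ (fun q _ n2 n3 n5 n7 => tab0 n2 n3 n5 n7)
  have k1 := H 1 _ _ _ _ (fun q _ n2 n3 n5 n7 => tab1 n2 n3 n5 n7)
  have k2 := H 2 _ _ _ _ (fun q _ n2 n3 n5 n7 => tab2 n2 n3 n5 n7)
  have k3 := H 3 _ _ _ _ (fun q _ n2 n3 n5 n7 => tab3 n2 n3 n5 n7)
  have er0 : (Finset.univ.erase (0 : Fin 8)) = {1,2,3,4,5,6,7} := by decide
  have er1 : (Finset.univ.erase (1 : Fin 8)) = {0,2,3,4,5,6,7} := by decide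
  have er2 : (Finset.univ.erase (2 : Fin 8)) = {0,1,3,4,5,6,7} := by decide
  have er3 : (Finset.univ.erase (3 : Fin 8)) = {0,1,2,4,5,6,7} := by decide
  rw [er0] at k0
  rw [er1] at k1
  rw [er2] at k2
  rw [er3] at k3
  have k02 := k0 1 (by decide)
  have k03 := k0 2 (by decide)
  have k05 := k0 3 (by decide)
  have k07 := k0 4 (by decide)
  have k12 := k1 1 (by decide)
  have k13 := k1 2 (by decide)
  have k15 := k1 3 (by decide)
  have k17 := k1 4 (by decide)
  have k22 := k2 1 (by decide)
  have k23 := k2 2 (by decide)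
  have k25 := k2 3 (by decide)
  have k27 := k2 4 (by decide)
  have k32 := k3 1 (by decide)
  have k33 := k3 2 (by decide)
  have k35 := k3 3 (by decide)
  have k37 := k3 4 (by decide)
  clear k0 k1 k2 k3 H
  simp at k02 k03 k05 k07 k12 k13 k15 k17 k22 k23 k25 k27 k32 k33 k35 k37
  haveI : Fact p.Prime := ⟨hp⟩
  have n4 : (4 : ZMod p) ≠ 0 := by
    intro h
    have h' : ((4 : ℕ) : ZMod p) = 0 := by exact_mod_cast h
    have := Nat.le_of_dvd (by norm_num) ((ZMod.natCast_eq_zero_iff _ _).1 h')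
    omega
  simp only [← ZMod.intCast_zmod_eq_zero_iff_dvd] at *
  push_cast at *
  have c5 : (e 5 : ZMod p) = e 0 := by linear_combination k07
  have c7 : (e 7 : ZMod p) = e 1 := by linear_combination k17
  have c4 : (e 4 : ZMod p) = e 2 := by linear_combination k27
  have c6 : (e 6 : ZMod p) = e 3 := by linear_combination k37
  rw [c4, c7] at k05 k35
  rw [c5, c6] at k15 k25
  have c1 : (e 1 : ZMod p) - e 0 = 0 := by
    apply (mul_eq_zero.1 (?_ : 4 * ((e 1 : ZMod p) - e 0) = 0)).resolve_left n4
    linear_combination k05 - k15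
  have c2 : (e 2 : ZMod p) - e 0 = 0 := by
    apply (mul_eq_zero.1 (?_ : 4 * ((e 2 : ZMod p) - e 0) = 0)).resolve_left n4
    linear_combination k05 - k25
  have c3 : (e 3 : ZMod p) - e 0 = 0 := by
    apply (mul_eq_zero.1 (?_ : 4 * ((e 3 : ZMod p) - e 0) = 0)).resolve_left n4
    linear_combination k05 - k35
  rw [sub_eq_zero] at c1 c2 c3
  rw [c1] at c7
  rw [c2] at c4
  rw [c3] at c6
  simp only [c1, c2, c3, c4, c5, c6, c7] at k02 k22 k03
  have d3 : (f3 : ZMod p) = 0 := by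
    apply (mul_eq_zero.1 (?_ : 4 * (f3 : ZMod p) = 0)).resolve_left n4
    linear_combination -k02 - k22
  refine ⟨?_, ?_, ?_, d3⟩
  · intro i
    fin_cases i <;> simp [c1, c2, c3, c4, c5, c6, c7]
  · linear_combination k02 + 2 * d3
  · linear_combination k03

lemma zpow_sum_aux {E ι : Type*} [CommGroup E] (a : E) (s : Finset ι) (f : ι → ℤ) :
    a ^ (∑ i ∈ s, f i) = ∏ i ∈ s, a ^ f i := by
  classical
  induction s using Finset.induction_on with
  | empty => simp
  | insert b s hb ih => rw [Finset.sum_insert hb, Finset.prod_insert hb, zpow_add, ih]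

lemma unit_gen {E : Type*} [CommGroup E] (p : ℕ) [Fact p.Prime] {m : ℕ} (g : Fin m → E)
    (T : Subgroup E) (hT : ∀ t ∈ T, ∃ s, t = s ^ p)
    (hg : ∀ u, ∃ t ∈ T, ∃ k : Fin m → ℤ, u = t * ∏ i, g i ^ k i) (ε : Fin m → E)
    (hε : ∀ f : Fin m → ℤ, (∃ w, ∏ i, ε i ^ f i = w ^ p) → ∀ i, (p : ℤ) ∣ f i) (u : E) :
    ∃ (f : Fin m → ℤ) (w : E), u = (∏ i, ε i ^ f i) * w ^ p := by
  choose t ht k hk using hg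
  -- main computation: if `k u ≡ ∑ f j k (ε j)` then `u = ∏ ε^f * w^p`
  have main : ∀ (v t0 : E) (_ : t0 ∈ T) (κ : Fin m → ℤ) (_ : v = t0 * ∏ i, g i ^ κ i)
      (f : Fin m → ℤ) (c : Fin m → ℤ),
      (∀ i, κ i = ∑ j, f j * k (ε j) i + p * c i) → ∃ w, v = (∏ j, ε j ^ f j) * w ^ p := by
    intro v t0 ht0 κ hκ f c hc
    obtain ⟨s, hs⟩ := hT (t0 * (∏ j, t (ε j) ^ f j)⁻¹)
      (T.mul_mem ht0 (T.inv_mem (T.prod_mem fun j _ => T.zpow_mem (ht _) _)))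
    refine ⟨s * ∏ i, g i ^ c i, ?_⟩
    have e1 : ∏ j, ε j ^ f j = (∏ j, t (ε j) ^ f j) * ∏ i, g i ^ (∑ j, f j * k (ε j) i) := by
      rw [Finset.prod_congr rfl (fun j _ => congrArg (fun z => z ^ f j) (hk (ε j)))]
      simp only [mul_zpow, Finset.prod_mul_distrib]
      congr 1
      simp only [← Finset.prod_zpow, ← zpow_mul]
      rw [Finset.prod_comm]
      refine Finset.prod_congr rfl fun i _ => ?_
      rw [zpow_sum_aux]
      exact Finset.prod_congr rfl fun j _ => by rw [mul_comm]
    have e2 : (∏ i, g i ^ c i) ^ p = ∏ i, g i ^ (p * c i) := by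
      rw [← Finset.prod_pow]
      refine Finset.prod_congr rfl fun i _ => ?_
      rw [mul_comm, zpow_mul, zpow_natCast]
    rw [mul_pow, ← hs, e1, e2]
    rw [hκ]
    simp only [hc, zpow_add, Finset.prod_mul_distrib]
    generalize (∏ j, t (ε j) ^ f j) = a
    generalize (∏ i, g i ^ (∑ j, f j * k (ε j) i)) = b
    generalize (∏ i, g i ^ (p * c i)) = d
    rw [show a * b * (t0 * a⁻¹ * d) = (a * a⁻¹) * (t0 * (b * d)) by
      ac_rfl, mul_inv_cancel, one_mul]
  have hk' : ∀ v w : Fin m → ℤ, (∀ i, ((v i : ℤ) : ZMod p) = w i) →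
      ∃ c : Fin m → ℤ, ∀ i, v i = w i + p * c i := by
    intro v w h
    have : ∀ i, ∃ c, v i = w i + p * c := by
      intro i
      obtain ⟨c, hc⟩ := (ZMod.intCast_eq_intCast_iff_dvd_sub _ _ _).1 (h i).symm
      exact ⟨c, by linarith⟩
    choose c hc using this
    exact ⟨c, hc⟩
  let L : (Fin m → ZMod p) →ₗ[ZMod p] (Fin m → ZMod p) :=
    Fintype.linearCombination (ZMod p) (fun j i => ((k (ε j) i : ℤ) : ZMod p))
  have hL : ∀ f i, L f i = ∑ j, f j * ((k (ε j) i : ℤ) : ZMod p) := by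
    intro f i
    simp [L, Fintype.linearCombination_apply, Finset.sum_apply]
  have lift : ∀ f : Fin m → ZMod p, ∃ F : Fin m → ℤ, ∀ i, ((F i : ℤ) : ZMod p) = f i := fun f =>
    ⟨fun i => (f i).valMinAbs, fun i => by simp⟩
  have hinj : Function.Injective L := by
    rw [injective_iff_map_eq_zero]
    intro f hf
    obtain ⟨F, hF⟩ := lift f
    have h1 : ∀ i, ∑ j, f j * ((k (ε j) i : ℤ) : ZMod p) = 0 := fun i => by rw [← hL, hf]; rfl
    -- work with `∏ ε^F`
    have h2 : ∃ w, ∏ i, ε i ^ F i = w ^ p := by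
      obtain ⟨d, hd⟩ := hk' (fun i => ∑ j, F j * k (ε j) i) 0 (by
        intro i
        have := h1 i
        push_cast
        simpa [hF] using this)
      simp only [Pi.zero_apply, zero_add] at hd
      obtain ⟨w, hw⟩ := main 1 1 T.one_mem 0 (by simp) F (fun i => - d i) (by
        intro i
        rw [hd i]; simp)
      exact ⟨w⁻¹, by rw [inv_pow]; exact eq_inv_of_mul_eq_one_left hw.symm⟩
    funext i
    rw [← hF i]
    exact (ZMod.intCast_zmod_eq_zero_iff_dvd _ _).2 (hε F h2 i)
  obtain ⟨f, hf⟩ := (LinearMap.injective_iff_surjective.1 hinj) (fun i => ((k u i : ℤ) : ZMod p))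
  obtain ⟨F, hF⟩ := lift f
  obtain ⟨c, hc⟩ := hk' (k u) (fun i => ∑ j, F j * k (ε j) i) (by
    intro i
    have := congrFun hf i
    rw [hL] at this
    push_cast
    rw [← this]
    simp [hF])
  obtain ⟨w, hw⟩ := main u (t u) (ht u) (k u) (hk u) F c hc
  exact ⟨F, w, hw⟩

set_option maxHeartbeats 1000000 in
lemma coprime_core {F : Type*} [Field F] (n2 : (2 : F) ≠ 0) (n3 : (3 : F) ≠ 0) (n5 : (5 : F) ≠ 0)
    (n7 : (7 : F) ≠ 0) (a b c d : F) (r1 : a * b = 1) (r2 : c * d = 1) (r3 : c * (a + 1) = a - 1)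
    (r4 : c * (1 + b) = 1 - b) (r5 : d * (a - 1) = a + 1) (r6 : d * (1 - b) = 1 + b)
    (i j : Fin 8) (hij : i ≠ j) (hi : (![a, -a, b, -b, c, -c, d, -d] : Fin 8 → F) i = 2)
    (hj : (![a, -a, b, -b, c, -c, d, -d] : Fin 8 → F) j = 2) : False := by
  have n4 : (4 : F) ≠ 0 := by
    have := mul_ne_zero n2 n2
    norm_num at this ⊢; exact this
  have n1 : (1 : F) ≠ 0 := one_ne_zero
  have fin : ∀ r : F, r = 0 → (r ≠ 1 ∧ r ≠ -1 ∧ r ≠ 3 ∧ r ≠ -3 ∧ r ≠ 4 ∧ r ≠ -4 ∧ r ≠ 5 ∧ r ≠ -5 ∧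
      r ≠ 7 ∧ r ≠ -7) := by
    rintro r rfl
    refine ⟨?_, ?_, ?_, ?_, ?_, ?_, ?_, ?_, ?_, ?_⟩ <;> intro h
    · exact n1 h.symm
    · exact n1 (neg_eq_zero.1 h.symm)
    · exact n3 h.symm
    · exact n3 (neg_eq_zero.1 h.symm)
    · exact n4 h.symm
    · exact n4 (neg_eq_zero.1 h.symm)
    · exact n5 h.symm
    · exact n5 (neg_eq_zero.1 h.symm)
    · exact n7 h.symm
    · exact n7 (neg_eq_zero.1 h.symm)
  have sq : ∀ z : F, z = 2 → -z = 2 → False := fun z h h' => n4 (by rw [h] at h'; linear_combination -h')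
  have neg : ∀ z : F, -z = 2 → z = -2 := fun z h => by rw [← h]; ring
  have p1 := fin _ (sub_eq_zero.2 r1)
  have p2 := fin _ (sub_eq_zero.2 r2)
  have p3 := fin _ (sub_eq_zero.2 r3)
  have p4 := fin _ (sub_eq_zero.2 r4)
  have p5 := fin _ (sub_eq_zero.2 r5)
  have p6 := fin _ (sub_eq_zero.2 r6)
  have v : ∀ k : Fin 8, (![a, -a, b, -b, c, -c, d, -d] : Fin 8 → F) k = 2 →
    (k = 0 ∧ a = 2) ∨ (k = 1 ∧ a = -2) ∨ (k = 2 ∧ b = 2) ∨ (k = 3 ∧ b = -2) ∨ (k = 4 ∧ c = 2) ∨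
    (k = 5 ∧ c = -2) ∨ (k = 6 ∧ d = 2) ∨ (k = 7 ∧ d = -2) := by
    intro k hk
    fin_cases k
    · exact Or.inl ⟨rfl, hk⟩
    · exact Or.inr (Or.inl ⟨rfl, neg _ hk⟩)
    · exact Or.inr (Or.inr (Or.inl ⟨rfl, hk⟩))
    · exact Or.inr (Or.inr (Or.inr (Or.inl ⟨rfl, neg _ hk⟩)))
    · exact Or.inr (Or.inr (Or.inr (Or.inr (Or.inl ⟨rfl, hk⟩))))
    · exact Or.inr (Or.inr (Or.inr (Or.inr (Or.inr (Or.inl ⟨rfl, neg _ hk⟩)))))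
    · exact Or.inr (Or.inr (Or.inr (Or.inr (Or.inr (Or.inr (Or.inl ⟨rfl, hk⟩))))))
    · exact Or.inr (Or.inr (Or.inr (Or.inr (Or.inr (Or.inr (Or.inr ⟨rfl, neg _ hk⟩))))))
  have two : ∀ z : F, z = 2 → z = -2 → False := fun z h h' => n4 (by linear_combination h' - h)
  rcases v i hi with ⟨hi0, h1⟩ | ⟨hi0, h1⟩ | ⟨hi0, h1⟩ | ⟨hi0, h1⟩ | ⟨hi0, h1⟩ | ⟨hi0, h1⟩ | ⟨hi0, h1⟩ | ⟨hi0, h1⟩ <;>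
  rcases v j hj with ⟨hj0, h2⟩ | ⟨hj0, h2⟩ | ⟨hj0, h2⟩ | ⟨hj0, h2⟩ | ⟨hj0, h2⟩ | ⟨hj0, h2⟩ | ⟨hj0, h2⟩ | ⟨hj0, h2⟩ <;>
  first
  | exact hij (hi0.trans hj0.symm)
  | exact two _ h1 h2
  | exact two _ h2 h1
  | (rw [h1, h2] at p1; norm_num at p1)
  | (rw [h1, h2] at p2; norm_num at p2)
  | (rw [h1, h2] at p3; norm_num at p3)
  | (rw [h1, h2] at p4; norm_num at p4)
  | (rw [h1, h2] at p5; norm_num at p5)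
  | (rw [h1, h2] at p6; norm_num at p6)

lemma rel_core {K : Type*} [Field K] [CharZero K] (A x : K) (hx : pf A x = 0) :
    rts x 0 * rts x 2 = 1 ∧ rts x 4 * rts x 6 = 1 ∧ rts x 4 * (rts x 0 + 1) = rts x 0 - 1 ∧
    rts x 4 * (1 + rts x 2) = 1 - rts x 2 ∧ rts x 6 * (rts x 0 - 1) = rts x 0 + 1 ∧
    rts x 6 * (1 - rts x 2) = 1 + rts x 2 := by
  obtain ⟨h0, h1, h2⟩ := pf_ne A x hx
  simp only [rts]
  refine ⟨?_, ?_, ?_, ?_, ?_, ?_⟩ <;> simp <;> field_simp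

lemma coprime_b {R : Type*} [CommRing R] (α : Fin 8 → R) (n y : ℕ)
    (hy : Nat.Coprime y 210)
    (r1 : α 0 * α 2 = 1) (r2 : α 4 * α 6 = 1) (r3 : α 4 * (α 0 + 1) = α 0 - 1)
    (r4 : α 4 * (1 + α 2) = 1 - α 2) (r5 : α 6 * (α 0 - 1) = α 0 + 1)
    (r6 : α 6 * (1 - α 2) = 1 + α 2) (s1 : α 1 = - α 0) (s3 : α 3 = - α 2) (s5 : α 5 = - α 4)
    (s7 : α 7 = - α 6) (hprod : ∏ i, (α i - 2) = (y : R) ^ n) (i j : Fin 8) (hij : i ≠ j) :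
    IsCoprime (Ideal.span {α i - 2}) (Ideal.span {α j - 2}) := by
  rw [Ideal.isCoprime_iff_sup_eq]
  by_contra hne
  obtain ⟨P, hP, hle⟩ := Ideal.exists_le_maximal _ hne
  letI := Ideal.Quotient.field P
  have hi : α i - 2 ∈ P := hle (Ideal.mem_sup_left (Ideal.mem_span_singleton_self _))
  have hj : α j - 2 ∈ P := hle (Ideal.mem_sup_right (Ideal.mem_span_singleton_self _))
  have hyP : (y : R) ∈ P := by
    apply hP.isPrime.mem_of_pow_mem n
    rw [← hprod]
    exact Ideal.prod_mem _ (Finset.mem_univ i) hi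
  let f := Ideal.Quotient.mk P
  have fz : ∀ z, f z = 0 ↔ z ∈ P := fun z => Ideal.Quotient.eq_zero_iff_mem
  have hn : ∀ m : ℕ, m ∣ 210 → (m : R ⧸ P) ≠ 0 := by
    intro m hm h0
    have hc : IsCoprime (y : ℤ) (m : ℤ) := Nat.isCoprime_iff_coprime.2 (hy.coprime_dvd_right hm)
    obtain ⟨a, b, hab⟩ := hc
    have h1 : (m : R) ∈ P := by rw [← fz]; simpa [f] using h0
    apply hP.ne_top
    rw [Ideal.eq_top_iff_one]
    have h2 : ((a * y + b * m : ℤ) : R) = 1 := by rw [hab]; simp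
    rw [← h2]
    push_cast
    exact P.add_mem (P.mul_mem_left _ hyP) (P.mul_mem_left _ h1)
  have v : ∀ k, f (α k) = (![f (α 0), -f (α 0), f (α 2), -f (α 2), f (α 4), -f (α 4), f (α 6),
      -f (α 6)] : Fin 8 → R ⧸ P) k := by
    intro k
    fin_cases k <;> simp [s1, s3, s5, s7]
  have e2 : ∀ k, α k - 2 ∈ P → f (α k) = 2 := by
    intro k hk
    have := (fz _).2 hk
    rw [map_sub, map_ofNat, sub_eq_zero] at this
    exact this
  refine coprime_core (F := R ⧸ P) (by exact_mod_cast hn 2 (by norm_num))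
    (by exact_mod_cast hn 3 (by norm_num)) (by exact_mod_cast hn 5 (by norm_num))
    (by exact_mod_cast hn 7 (by norm_num)) (f (α 0)) (f (α 2)) (f (α 4)) (f (α 6)) ?_ ?_ ?_ ?_ ?_ ?_
    i j hij ((v i).symm.trans (e2 i hi)) ((v j).symm.trans (e2 j hj))
  · simpa using congrArg f r1
  · simpa using congrArg f r2
  · simpa using congrArg f r3
  · simpa using congrArg f r4
  · simpa using congrArg f r5
  · simpa using congrArg f r6

lemma no_root_unity {K : Type*} [Field K] (q p : ℕ) [Fact q.Prime] (φ : K →+* ℚ_[q])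
    (hp : p.Prime) (hqp : q % p = 2) (hp5 : 5 ≤ p) (z : K) (hz : z ^ p = 1) : z = 1 := by
  have hw : (φ z) ^ p = 1 := by rw [← map_pow, hz, map_one]
  by_contra hne
  have hne' : φ z ≠ 1 := fun h => hne (φ.injective (by rw [h, map_one]))
  have hnorm : ‖φ z‖ ≤ 1 := by
    have : ‖φ z‖ ^ p = 1 := by rw [← norm_pow, hw, norm_one]
    exact (pow_le_one_iff_of_nonneg (norm_nonneg _) hp.pos.ne').1 this.le
  have hred : Red q (φ z) (PadicInt.toZMod ⟨φ z, hnorm⟩) := ⟨⟨φ z, hnorm⟩, rfl, rfl⟩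
  generalize PadicInt.toZMod (⟨φ z, hnorm⟩ : ℤ_[q]) = c at hred
  have hc : c ^ p = 1 := by
    have := hred.pow p
    rw [hw] at this
    exact this.uniq Red.one
  have hq1 : 1 < q := (Fact.out : q.Prime).one_lt
  have hc1 : c = 1 := by
    have hc0 : c ≠ 0 := by
      rintro rfl
      rw [zero_pow hp.pos.ne'] at hc
      exact zero_ne_one hc
    have h1 : orderOf c ∣ p := orderOf_dvd_of_pow_eq_one hc
    have h2 : orderOf c ∣ q - 1 := orderOf_dvd_of_pow_eq_one (ZMod.pow_card_sub_one_eq_one hc0)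
    rcases (Nat.dvd_prime hp).1 h1 with h | h
    · exact orderOf_eq_one_iff.1 h
    · rw [h] at h2
      have : q % p = 1 := by
        obtain ⟨k, hk⟩ := h2
        rw [show q = 1 + p * k by omega, Nat.add_mul_mod_self_left, Nat.mod_eq_of_lt hp.one_lt]
      omega
  have hgeom : ∑ i ∈ Finset.range p, (φ z) ^ i = 0 := by
    have := geom_sum_mul (φ z) p
    rw [hw, sub_self] at this
    exact (mul_eq_zero.1 this).resolve_right (sub_ne_zero.2 hne')
  have hsum : Red q (∑ i ∈ Finset.range p, (φ z) ^ i) (∑ i ∈ Finset.range p, c ^ i) := by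
    generalize p = m
    induction m with
    | zero => simpa using Red.nat (q := q) 0
    | succ m ih => rw [Finset.sum_range_succ, Finset.sum_range_succ]; exact ih.add (hred.pow m)
  rw [hgeom, hc1] at hsum
  have h0 : ((p : ℕ) : ZMod q) = 0 := by
    have := hsum.uniq (by simpa using Red.nat (q := q) 0 : Red q 0 0)
    simpa using this
  have hd := (ZMod.natCast_eq_zero_iff _ _).1 h0
  rcases (Nat.dvd_prime hp).1 hd with h | h
  · omega
  · rw [h, Nat.mod_self] at hqp
    omega

lemma unit_decomp {K : Type*} [Field K] [NumberField K] (m : ℕ) (hrank : Units.rank K = m) (p : ℕ)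
    (hp : p.Prime) (hroot : ∀ z : K, z ^ p = 1 → z = 1) (ε : Fin m → (𝓞 K)ˣ)
    (hε : ∀ f : Fin m → ℤ, (∃ w, ∏ i, ε i ^ f i = w ^ p) → ∀ i, (p : ℤ) ∣ f i) (u : (𝓞 K)ˣ) :
    ∃ (f : Fin m → ℤ) (w : (𝓞 K)ˣ), u = (∏ i, ε i ^ f i) * w ^ p := by
  subst hrank
  have : Fact p.Prime := ⟨hp⟩
  refine unit_gen p (Units.fundSystem K) (Units.torsion K) ?_ ?_ ε hε u
  · intro t ht
    have hinj : Function.Injective (fun s : Units.torsion K => s ^ p) := by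
      intro a b hab
      simp only at hab
      have h1 : (a / b) ^ p = 1 := by rw [div_pow, hab, div_self']
      have h2 : (((a / b : Units.torsion K) : (𝓞 K)ˣ) : K) ^ p = 1 := by
        have := congrArg (fun s : Units.torsion K => ((s : (𝓞 K)ˣ) : K)) h1
        simpa using this
      have h3 := hroot _ h2
      have h4 : ((a / b : Units.torsion K) : (𝓞 K)ˣ) = 1 := by
        apply Units.coe_injective K
        simpa using h3
      have h5 : a / b = 1 := Subtype.coe_injective h4
      exact div_eq_one.1 h5
    obtain ⟨s, hs⟩ := (Finite.injective_iff_surjective.1 hinj) ⟨t, ht⟩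
    exact ⟨s, by rw [← Subgroup.coe_pow]; exact (congrArg Subtype.val hs).symm⟩
  · intro v
    obtain ⟨⟨ζ, k⟩, h, -⟩ := Units.exist_unique_eq_mul_prod K v
    exact ⟨ζ, ζ.2, k, h⟩

lemma rank_three {K : Type*} [Field K] [NumberField K] (h8 : Module.finrank ℚ K = 8)
    (him : ∀ φ : K →+* ℂ, ∃ z, (φ z).im ≠ 0) : Units.rank K = 3 := by
  have : IsTotallyComplex K := ⟨fun v => by
    rw [InfinitePlace.isComplex_iff]
    intro hr
    obtain ⟨z, hz⟩ := him v.embedding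
    apply hz
    have := RingHom.congr_fun (ComplexEmbedding.isReal_iff.1 hr) z
    exact Complex.conj_eq_iff_im.1 this⟩
  have h1 := IsTotallyComplex.finrank K
  have h2 := IsTotallyComplex.nrRealPlaces_eq_zero K
  have h3 := InfinitePlace.card_eq_nrRealPlaces_add_nrComplexPlaces K
  unfold Units.rank
  omega

lemma class_core {R : Type*} [CommRing R] [IsDedekindDomain R] (n : ℕ) (hn : 1 < n)
    (b : Fin 8 → R) (y : R) (hy : y ≠ 0) (hprod : ∏ i, b i = y ^ n)
    (hcop : ∀ i j, i ≠ j → IsCoprime (Ideal.span {b i}) (Ideal.span {b j}))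
    (hstar : ∀ p, p.Prime → p ∣ n → ∀ e : Fin 7 → ℕ, ∀ (u : Rˣ) (γ : R),
      (∏ i, b i.castSucc ^ e i) * u = γ ^ p → ∀ i, p ∣ e i) :
    HasZModRankGE (ClassGroup R) n 7 := by
  classical
  let _ : GCDMonoid (Ideal R) := UniqueFactorizationMonoid.toGCDMonoid _
  have hb : ∀ i, b i ≠ 0 := by
    intro i hi
    have : ∏ i, b i = 0 := Finset.prod_eq_zero (Finset.mem_univ i) hi
    rw [hprod] at this
    exact pow_ne_zero _ hy this
  have hI : ∏ i, Ideal.span {b i} = (Ideal.span {y}) ^ n := by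
    rw [Ideal.prod_span_singleton, hprod, Ideal.span_singleton_pow]
  have hpow : ∀ i, ∃ a : Ideal R, Ideal.span {b i} = a ^ n := fun i =>
    Finset.exists_eq_pow_of_mul_eq_pow_of_coprime (fun i _ j _ h => hcop i j h) hI i
      (Finset.mem_univ i)
  choose a ha using hpow
  have ha0 : ∀ i, a i ≠ 0 := by
    intro i hi
    have := ha i
    rw [hi, zero_pow (by omega), Ideal.zero_eq_bot, Ideal.span_singleton_eq_bot] at this
    exact hb i this
  have ha1 : ∀ i, a i ∈ nonZeroDivisors (Ideal R) := fun i =>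
    mem_nonZeroDivisors_of_ne_zero (ha0 i)
  apply rank_criterion n 7 hn (fun i => ClassGroup.mk0 ⟨a i.castSucc, ha1 _⟩)
  · intro i
    rw [← map_pow]
    refine (ClassGroup.mk0_eq_one_iff (pow_mem (ha1 _) n)).2 ?_
    rw [← ha]
    infer_instance
  · intro p hp hpn e he
    obtain ⟨k, rfl⟩ := hpn
    rw [Nat.mul_div_cancel_left _ hp.pos] at he
    simp only [← map_pow, ← map_prod] at he
    have hmem : ∏ i : Fin 7, (a i.castSucc ^ k) ^ e i ∈ nonZeroDivisors (Ideal R) :=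
      prod_mem fun i _ => pow_mem (pow_mem (ha1 _) _) _
    have he' : ClassGroup.mk0 ⟨∏ i : Fin 7, (a i.castSucc ^ k) ^ e i, hmem⟩ = 1 := by
      rw [← he]
      congr 1
    rw [ClassGroup.mk0_eq_one_iff] at he'
    obtain ⟨γ, hγ⟩ := he'.principal
    have hγ' : ∏ i : Fin 7, (a i.castSucc ^ k) ^ e i = Ideal.span {γ} := hγ
    have h1 : Ideal.span {∏ i : Fin 7, b i.castSucc ^ e i} = Ideal.span {γ ^ p} := by
      rw [← Ideal.span_singleton_pow, ← hγ', ← Finset.prod_pow, ← Ideal.prod_span_singleton]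
      refine Finset.prod_congr rfl fun i _ => ?_
      rw [← Ideal.span_singleton_pow, ha, ← pow_mul, ← pow_mul, ← pow_mul]
      congr 1; ring
    obtain ⟨u, hu⟩ := Ideal.span_singleton_eq_span_singleton.1 h1
    exact hstar p hp ⟨k, rfl⟩ e u γ hu

lemma integral_of_pf {K : Type*} [Field K] (A : ℤ) (x : K) (hx : pf (A : K) x = 0) :
    IsIntegral ℤ x := by
  refine ⟨X ^ 8 + C (4 * A) * X ^ 6 - C (8 * A - 14) * X ^ 4 + C (4 * A) * X ^ 2 + 1, ?_, ?_⟩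
  · monicity!
  · unfold pf at hx
    rw [← aeval_def]
    simp [map_ofNat]
    linear_combination hx

lemma integral_v {K : Type*} [Field K] (A : ℤ) (v : K) (hv : v ^ 4 + (A - 1) * v ^ 2 + (1 - A) = 0) :
    IsIntegral ℤ v := by
  refine ⟨X ^ 4 + C (A - 1) * X ^ 2 + C (1 - A), ?_, ?_⟩
  · monicity!
  · rw [← aeval_def]
    simp
    linear_combination hv

lemma class_rank {K : Type*} [Field K] [NumberField K] (A : ℤ) (hA : 1 < A) (n y : ℕ)
    (hn : 1 < n) (hn6 : Nat.Coprime n 6) (hy : 0 < y) (hy210 : Nat.Coprime y 210)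
    (hY : 144 * A + 481 = (y : ℤ) ^ n) (q0 : ℕ) (hq0 : q0.Prime) (hq7 : 7 < q0) (hqy : q0 ∣ y)
    (hqn : q0 % n = 2) (hgood : ∀ p, p.Prime → p ∣ n → GoodAt p y)
    (x : K) (hx : pf (A : K) x = 0) (hgen : Algebra.adjoin ℚ {x} = ⊤) :
    HasZModRankGE (ClassGroup (𝓞 K)) n 7 := by
  obtain ⟨-, -, h8, -, -, hmin⟩ := field_struct A hA x hx hgen
  have hxint : IsIntegral ℚ x := Algebra.IsIntegral.isIntegral x
  have hrank : Units.rank K = 3 := rank_three h8 fun φ => ⟨_, tot_imag A hA x hx φ⟩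
  obtain ⟨x0, x1, x2⟩ := pf_ne (A : K) x hx
  -- integral elements
  have hαint : ∀ i, IsIntegral ℤ (rts x i) := fun i => integral_of_pf A _ (pf_rts (A : K) x hx i)
  let α : Fin 8 → 𝓞 K := fun i => ⟨rts x i, hαint i⟩
  have hα : ∀ i, ((α i : 𝓞 K) : K) = rts x i := fun i => rfl
  let v : K := (x + 1 / x) / 2
  have hv : v ^ 4 + (A - 1) * v ^ 2 + (1 - A) = 0 := by
    have hx' := hx
    unfold pf at hx'
    simp only [v]
    field_simp
    linear_combination hx'
  let V : 𝓞 K := ⟨v, integral_v A v hv⟩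
  have hV : ((V : 𝓞 K) : K) = v := rfl
  have inj : Function.Injective (fun z : 𝓞 K => (z : K)) := RingOfIntegers.coe_injective
  obtain ⟨r1, r2, r3, r4, r5, r6⟩ := rel_core (A : K) x hx
  have R1 : α 0 * α 2 = 1 := inj r1
  have R2 : α 4 * α 6 = 1 := inj r2
  have R3 : α 4 * (α 0 + 1) = α 0 - 1 := inj r3
  have R4 : α 4 * (1 + α 2) = 1 - α 2 := inj r4
  have R5 : α 6 * (α 0 - 1) = α 0 + 1 := inj r5
  have R6 : α 6 * (1 - α 2) = 1 + α 2 := inj r6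
  have S1 : α 1 = - α 0 := inj rfl
  have S3 : α 3 = - α 2 := inj rfl
  have S5 : α 5 = - α 4 := inj rfl
  have S7 : α 7 = - α 6 := inj rfl
  have RV : (V - 1) * (-(V + 1) * (V ^ 2 + (A : 𝓞 K))) = 1 := by
    apply inj
    simp only [map_mul, map_sub, map_add, map_neg, map_pow, map_one, map_intCast, hV]
    linear_combination -hv
  let ε : Fin 3 → (𝓞 K)ˣ := ![⟨α 0, α 2, R1, by rw [mul_comm]; exact R1⟩,
    ⟨α 6, α 4, by rw [mul_comm]; exact R2, R2⟩, ⟨V - 1, _, RV, by rw [mul_comm]; exact RV⟩]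
  have hε : ∀ f : Fin 3 → ℤ, ((∏ i, ε i ^ f i : (𝓞 K)ˣ) : K) = x ^ f 0 *
      ((x + 1) / (x - 1)) ^ f 1 * ((x - 1) ^ 2 / (2 * x)) ^ f 2 := by
    intro f
    have e0 : ((ε 0 : (𝓞 K)ˣ) : K) = x := rfl
    have e1 : ((ε 1 : (𝓞 K)ˣ) : K) = (x + 1) / (x - 1) := rfl
    have e2 : ((ε 2 : (𝓞 K)ˣ) : K) = (x - 1) ^ 2 / (2 * x) := by
      have : ((ε 2 : (𝓞 K)ˣ) : K) = v - 1 := rfl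
      rw [this]
      simp only [v]
      field_simp
      ring
    rw [Fin.prod_univ_three]
    simp only [Units.coe_mul, Units.coe_zpow, e0, e1, e2]
  have hprod : ∏ i, (α i - 2) = (y : 𝓞 K) ^ n := by
    apply inj
    simp only [map_prod, map_sub, map_ofNat, map_pow, map_natCast, hα]
    have e1 := prod_rts (A : K) x hx 2
    have e2 : ∏ i, (rts x i - 2) = ∏ i, (2 - rts x i) := by
      rw [Fin.prod_univ_eight, Fin.prod_univ_eight]; ring
    rw [e2, e1]
    have : (((144 * A + 481 : ℤ)) : K) = (((y : ℤ) ^ n : ℤ) : K) := by rw [hY]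
    push_cast at this
    unfold pf
    rw [← this]; ring
  have hp5 : ∀ p, p.Prime → p ∣ n → 5 ≤ p := by
    intro p hp hpn
    by_contra hlt
    have h6 := hn6.coprime_dvd_left hpn
    have := hp.two_le
    interval_cases p
    · norm_num at h6
    · norm_num at h6
    · norm_num at hp
  refine class_core n hn (fun i => α i - 2) (y : 𝓞 K) (by exact_mod_cast hy.ne') hprod
    (coprime_b α n y hy210 R1 R2 R3 R4 R5 R6 S1 S3 S5 S7 hprod) ?_
  intro p hp hpn e u γ h
  have : Fact q0.Prime := ⟨hq0⟩
  obtain ⟨r, hr, -⟩ := hensel_root q0 hq7 n y (by omega) A hY hqy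
  obtain ⟨φ, -⟩ := exists_emb x hxint hgen q0 r (by rw [hmin, PA_aeval]; exact hr)
  have hq0p : q0 % p = 2 := by
    rw [← Nat.mod_mod_of_dvd q0 hpn, hqn, Nat.mod_eq_of_lt (by have := hp5 p hp hpn; omega)]
  have ST := star A n y p hy (by omega) hY x hxint hmin hgen hp hpn (hp5 p hp hpn) (hgood p hp hpn)
  obtain ⟨f, w, hu⟩ := unit_decomp 3 hrank p hp
    (no_root_unity q0 p φ hp hq0p (hp5 p hp hpn)) ε (by
      rintro f ⟨w, hw⟩
      have h1 := hε f
      rw [hw] at h1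
      have := ST 0 (f 0) (f 1) (f 2) ((w : (𝓞 K)ˣ) : K) (by
        rw [← Units.coe_pow, h1]; simp)
      intro i
      fin_cases i
      · exact this.2.1
      · exact this.2.2.1
      · exact this.2.2.2) u
  have key := ST (fun i => if h : i.val < 7 then (e ⟨i.val, h⟩ : ℤ) else 0) (f 0) (f 1) (f 2)
    ((γ : K) * (((w⁻¹ : (𝓞 K)ˣ)) : K)) (by
      have h1 := congrArg (fun z : 𝓞 K => (z : K)) h
      simp only [map_mul, map_prod, map_sub, map_ofNat, map_pow, hα] at h1
      have h2 : algebraMap (𝓞 K) K (u : 𝓞 K) = x ^ f 0 *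
        ((x + 1) / (x - 1)) ^ f 1 * ((x - 1) ^ 2 / (2 * x)) ^ f 2 * ((w : (𝓞 K)ˣ) : K) ^ p := by
        rw [hu, ← hε]; simp
      have hw0 : ((w : (𝓞 K)ˣ) : K) ≠ 0 := Units.coe_ne_zero w
      have h3 : ∏ i : Fin 8, (rts x i - 2) ^ (if h : i.val < 7 then (e ⟨i.val, h⟩ : ℤ) else 0) =
          ∏ i : Fin 7, (rts x i.castSucc - 2) ^ e i := by
        rw [Fin.prod_univ_castSucc]
        simp
      rw [h3, mul_pow, ← h1, h2]
      have h4 : ((w : (𝓞 K)ˣ) : K) ^ p * (((w⁻¹ : (𝓞 K)ˣ)) : K) ^ p = 1 := by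
        rw [← mul_pow, ← Units.coe_mul, mul_inv_cancel]; simp
      linear_combination (-((∏ i : Fin 7, (rts x i.castSucc - 2) ^ e i) * x ^ f 0 *
        ((x + 1) / (x - 1)) ^ f 1 * ((x - 1) ^ 2 / (2 * x)) ^ f 2)) * h4)
  intro i
  have := key.1 i.castSucc
  simp at this
  exact_mod_cast this

lemma class_rank' {K : Type*} [Field K] [NumberField K] [inst : Algebra ℚ K]
    (A : ℤ) (hA : 1 < A) (n y : ℕ) (hn : 1 < n)
    (hn6 : Nat.Coprime n 6) (hy : 0 < y) (hy210 : Nat.Coprime y 210)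
    (hY : 144 * A + 481 = (y : ℤ) ^ n) (q0 : ℕ) (hq0 : q0.Prime) (hq7 : 7 < q0) (hqy : q0 ∣ y)
    (hqn : q0 % n = 2) (hgood : ∀ p, p.Prime → p ∣ n → GoodAt p y) (x : K)
    (hx : pf (A : K) x = 0) (hgen : Algebra.adjoin ℚ {x} = ⊤) :
    HasZModRankGE (ClassGroup (𝓞 K)) n 7 := by
  obtain rfl : inst = DivisionRing.toRatAlgebra := Subsingleton.elim _ _
  exact class_rank A hA n y hn hn6 hy hy210 hY q0 hq0 hq7 hqy hqn hgood x hx hgen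

/-- The conclusion of the main theorem for a single field. -/
def GoodField (n : ℕ) (K : IntermediateField ℚ ℂ) : Prop :=
  ∃ y : ℕ, 0 < y ∧ ¬ (5 ∣ y) ∧ ¬ (7 ∣ y) ∧
        (n % 3 = 1 → y % 144 = 49) ∧ (n % 3 = 2 → y % 144 = 97) ∧
        (let P : Polynomial ℚ := X ^ 8 + C (((y : ℚ) ^ n - 481) / 36) * X ^ 6 -
          C (((y : ℚ) ^ n - 733) / 18) * X ^ 4 + C (((y : ℚ) ^ n - 481) / 36) * X ^ 2 + 1
         Irreducible P ∧ P.IsSplittingField ℚ K) ∧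
        NumberField K ∧ Module.finrank ℚ K = 8 ∧ IsGalois ℚ K ∧
        Nonempty ((K ≃ₐ[ℚ] K) ≃* DihedralGroup 4) ∧
        TotallyImaginary K ∧
        HasZModRankGE (ClassGroup (𝓞 K)) n 7

lemma pow_mod_aux (n y : ℕ) (hn6 : Nat.Coprime n 6)
    (hc : y % 144 = if n % 3 = 1 then 49 else 97) : (y : ℤ) ^ n % 144 = 49 := by
  have h3 : n % 3 = 1 ∨ n % 3 = 2 := by
    have : ¬ 3 ∣ n := fun h => by
      have := Nat.dvd_gcd h (show 3 ∣ 6 by norm_num)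
      rw [hn6] at this; omega
    omega
  have key : (y : ZMod 144) ^ n = 49 := by
    rw [← ZMod.natCast_mod y 144, hc]
    rcases h3 with h | h
    · obtain ⟨k, rfl⟩ : ∃ k, n = 3 * k + 1 := ⟨n / 3, by omega⟩
      rw [if_pos h, pow_add, pow_mul, show ((49 : ℕ) : ZMod 144) ^ 3 = 1 by decide, one_pow]
      decide
    · obtain ⟨k, rfl⟩ : ∃ k, n = 3 * k + 2 := ⟨n / 3, by omega⟩
      rw [if_neg (by omega), pow_add, pow_mul, show ((97 : ℕ) : ZMod 144) ^ 3 = 1 by decide,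
        one_pow]
      decide
  have h2 : (((y : ℤ) ^ n : ℤ) : ZMod 144) = ((49 : ℤ) : ZMod 144) := by
    push_cast; exact key
  rw [ZMod.intCast_eq_intCast_iff] at h2
  exact h2

lemma good_field (n y Q q0 : ℕ) (hn : 1 < n) (hn6 : Nat.Coprime n 6) (hQ : 1000 < Q)
    (hq0 : q0.Prime) (hq7 : 7 < q0) (hqQ : q0 ∣ Q) (hqn : q0 % n = 2)
    (hgood : ∀ p, p.Prime → p ∣ n → GoodAt p y) (hQy : Q ∣ y) (hy : 0 < y)
    (hc : y % 144 = if n % 3 = 1 then 49 else 97) (h35 : y % 35 = 1) :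
    ∃ K : IntermediateField ℚ ℂ, GoodField n K ∧ ∃ s : K, s ^ 2 = ((49 - (y : ℤ) ^ n : ℤ) : K) := by
  have hmod := pow_mod_aux n y hn6 hc
  have hy1000 : 1000 < y := lt_of_lt_of_le hQ (Nat.le_of_dvd hy hQy)
  have hbig : (1000 : ℤ) < (y : ℤ) ^ n := by
    have : y ≤ y ^ n := Nat.le_self_pow (by omega) y
    exact_mod_cast lt_of_lt_of_le hy1000 this
  obtain ⟨A, hA⟩ : ∃ A : ℤ, 144 * A + 481 = (y : ℤ) ^ n := ⟨((y : ℤ) ^ n - 481) / 144, by omega⟩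
  have hA1 : 1 < A := by omega
  have hc' : y % 144 = 49 ∨ y % 144 = 97 := by split_ifs at hc <;> simp [hc]
  have hy210 : Nat.Coprime y 210 := by
    have h2 : y % 210 = 1 ∨ y % 210 = 71 ∨ y % 210 = 36 ∨ y % 210 = 106 ∨ y % 210 = 141 ∨ y % 210 = 176 := by omega
    have h6 : y % 6 = 1 := by omega
    have : y % 210 = 1 := by omega
    rw [Nat.Coprime, Nat.gcd_comm, Nat.gcd_rec, this]; norm_num
  obtain ⟨α, hα⟩ : ∃ α : ℂ, aeval α (PA A) = 0 := by
    refine IsAlgClosed.exists_aeval_eq_zero ℂ (PA A) ?_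
    rw [degree_eq_natDegree (PA_monic A).ne_zero, PA_natDegree]; norm_num
  have hαint : IsIntegral ℚ α := ⟨PA A, PA_monic A, by simpa [aeval_def] using hα⟩
  let K : IntermediateField ℚ ℂ := IntermediateField.adjoin ℚ {α}
  let x : K := IntermediateField.AdjoinSimple.gen ℚ α
  have hx : pf (A : K) x = 0 := by
    rw [← PA_aeval]
    apply (algebraMap K ℂ).injective
    rw [map_zero, ← aeval_algebraMap_apply]
    exact hα
  have hgen : Algebra.adjoin ℚ {x} = ⊤ := by
    have h1 := (IntermediateField.adjoin.powerBasis hαint).adjoin_gen_eq_top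
    rwa [IntermediateField.adjoin.powerBasis_gen] at h1
  obtain ⟨hirr, hfd, hdeg, hgal, hiso, -⟩ := field_struct A hA1 x hx hgen
  have : NumberField K := NumberField.of_module_finite ℚ K
  have hYQ : (y : ℚ) ^ n = 144 * A + 481 := by exact_mod_cast hA.symm
  refine ⟨K, ⟨y, hy, by omega, by omega, ?_, ?_, ?_, inferInstance, hdeg, hgal, hiso, ?_, ?_⟩,
    12 * (mu x - (mu x)⁻¹), ?_⟩
  · intro h; simpa [h] using hc
  · intro h; simpa [h] using hc
  · have e : X ^ 8 + C (((y : ℚ) ^ n - 481) / 36) * X ^ 6 -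
          C (((y : ℚ) ^ n - 733) / 18) * X ^ 4 + C (((y : ℚ) ^ n - 481) / 36) * X ^ 2 + 1 = PA A := by
      unfold PA
      rw [hYQ, show (144 * (A : ℚ) + 481 - 481) / 36 = 4 * A by ring,
        show (144 * (A : ℚ) + 481 - 733) / 18 = 8 * A - 14 by ring]
    rw [e]
    exact ⟨hirr, PA_splitting A x hx hgen⟩
  · exact fun φ => ⟨_, tot_imag A hA1 x hx φ⟩
  · exact class_rank' A hA1 n y hn hn6 hy hy210 hA q0 hq0 hq7 (hqQ.trans hQy) hqn hgood x hx hgen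
  · rw [mul_pow, s2_sq (A : K) x hx, ← hA]; push_cast; ring

lemma iso_eq (K K' : IntermediateField ℚ ℂ) [IsGalois ℚ K] (e : K ≃+* K') : K = K' := by
  let f : K →ₐ[ℚ] K' := (e : K →+* K').toRatAlgHom
  let g : K →ₐ[ℚ] ℂ := K'.val.comp f
  have hN : @Normal ℚ K _ _ K.algebra' := by
    convert IsGalois.to_normal (F := ℚ) (E := K)
    exact Subsingleton.elim _ _
  have h1 : g.fieldRange = K := @AlgHom.fieldRange_of_normal _ _ _ _ _ K hN g
  rw [← h1]
  ext z
  constructor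
  · rintro ⟨a, rfl⟩
    exact (f a).2
  · intro hz
    refine ⟨e.symm ⟨z, hz⟩, ?_⟩
    change ((e (e.symm ⟨z, hz⟩) : K') : ℂ) = z
    simp

lemma not_sq_aux (l a b : ℤ) (hl : Prime l) (h1 : l ∣ a) (h2 : ¬ l ^ 2 ∣ a) (h3 : ¬ l ∣ b) :
    ¬ IsSquare (a * b) := by
  rintro ⟨r, hr⟩
  have hlr : l ∣ r := by
    have : l ∣ r * r := hr ▸ h1.mul_right b
    exact (hl.dvd_or_dvd this).elim id id
  have h4 : l ^ 2 ∣ a * b := by rw [hr, sq]; exact mul_dvd_mul hlr hlr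
  exact h2 (hl.pow_dvd_of_dvd_mul_right 2 h3 h4)

lemma finite_sq (K : IntermediateField ℚ ℂ) [FiniteDimensional ℚ K] [IsGalois ℚ K]
    {ι : Type*} [Infinite ι] (d : ι → ℤ) (s : ι → K) (hs : ∀ i, s i ^ 2 = ((d i : ℤ) : K)) :
    ∃ i j, i ≠ j ∧ IsSquare (d i * d j) := by
  obtain ⟨i, j, hij, he⟩ := Finite.exists_ne_map_eq_of_infinite
    (fun i => {σ : K ≃ₐ[ℚ] K | σ (s i) = s i})
  refine ⟨i, j, hij, ?_⟩
  have hpm : ∀ k (σ : K ≃ₐ[ℚ] K), σ (s k) = s k ∨ σ (s k) = - s k := by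
    intro k σ
    apply sq_eq_sq_iff_eq_or_eq_neg.mp
    rw [← map_pow, hs, map_intCast]
  have hfix : ∀ σ : K ≃ₐ[ℚ] K, σ (s i * s j) = s i * s j := by
    intro σ
    have h1 : σ (s i) = s i ↔ σ (s j) = s j := Set.ext_iff.mp he σ
    rw [map_mul]
    by_cases h : σ (s i) = s i
    · rw [h, h1.mp h]
    · rw [(hpm i σ).resolve_left h, (hpm j σ).resolve_left (fun h' => h (h1.mpr h'))]; ring
  obtain ⟨r, hr⟩ := (IsGalois.mem_range_algebraMap_iff_fixed (F := ℚ) (s i * s j)).mpr hfix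
  have h2 : r ^ 2 = ((d i * d j : ℤ) : ℚ) := by
    apply (algebraMap ℚ K).injective
    rw [map_pow, hr, mul_pow, hs, hs, map_intCast]; push_cast; rfl
  rw [← Rat.isSquare_intCast_iff, ← h2]
  exact ⟨r, sq r⟩

theorem main_aux (n : ℕ) (hn : 1 < n) (hn6 : Nat.Coprime n 6) :
    ∃ S : Set (IntermediateField ℚ ℂ), S.Infinite ∧ ∀ K ∈ S, GoodField n K := by
  obtain ⟨Q, q0, hQ, hQl, hq0, hq7, hqQ, hqn, hgood⟩ := exists_Q n hn hn6
  let P : ℕ → Prop := fun y => 0 < y ∧ Q ∣ y ∧ y % 144 = (if n % 3 = 1 then 49 else 97) ∧ y % 35 = 1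
  let r : ℕ → ℕ → Prop := fun y z => ¬ IsSquare (((y : ℤ) ^ n - 49) * ((z : ℤ) ^ n - 49))
  have : Std.Symm r := ⟨fun y z h => by simp only [r] at *; rwa [mul_comm]⟩
  obtain ⟨f, hf, hfr⟩ := exists_seq_of_forall_finset_exists' P r (by
    intro s hs
    obtain ⟨y, l, h1, h2, h3, h4, h5, h6, h7, h8⟩ := exists_y n hn hn6 Q hQ hQl (∑ z ∈ s, z ^ n)
      (if n % 3 = 1 then 49 else 97)
    refine ⟨y, ⟨h2, h1, ?_, h4⟩, ?_⟩
    · rw [h3]; split_ifs <;> norm_num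
    · intro z hz
      simp only [r]
      rw [mul_comm]
      refine not_sq_aux l _ _ (Nat.prime_iff_prime_int.mp h5) h7 h8 ?_
      intro hd
      obtain ⟨hz0, hQz, -, -⟩ := hs z hz
      have hz1 : 1000 < z := lt_of_lt_of_le hQ (Nat.le_of_dvd hz0 hQz)
      have hz2 : z ≤ z ^ n := Nat.le_self_pow (by omega) z
      have hz3 : z ^ n ≤ ∑ z ∈ s, z ^ n := Finset.single_le_sum (f := fun z => z ^ n) (fun _ _ => Nat.zero_le _) hz
      have hz4 : z ^ n < l := lt_of_le_of_lt hz3 h6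
      have hz5 : (1000 : ℤ) < (z : ℤ) ^ n := by exact_mod_cast lt_of_lt_of_le hz1 hz2
      have hz6 : (z : ℤ) ^ n < l := by exact_mod_cast hz4
      have := Int.le_of_dvd (by omega) hd
      omega)
  have hK : ∀ m, ∃ K : IntermediateField ℚ ℂ, GoodField n K ∧
      ∃ s : K, s ^ 2 = ((49 - (f m : ℤ) ^ n : ℤ) : K) := by
    intro m
    obtain ⟨h1, h2, h3, h4⟩ := hf m
    exact good_field n (f m) Q q0 hn hn6 hQ hq0 hq7 hqQ hqn (hgood _ h2) h2 h1 h3 h4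
  choose K hKg hKs using hK
  refine ⟨Set.range K, ?_, ?_⟩
  · intro hfin
    have : Finite (Set.range K) := hfin
    obtain ⟨⟨K0, m0, hm0⟩, hinf⟩ := Finite.exists_infinite_fiber (Set.rangeFactorization K)
    have hg : GoodField n K0 := hm0 ▸ hKg m0
    obtain ⟨-, -, -, -, -, -, -, hnf, -, hgal, -⟩ := hg
    have : FiniteDimensional ℚ K0 := hnf.to_finiteDimensional
    have hs : ∀ i : (Set.rangeFactorization K ⁻¹' {⟨K0, m0, hm0⟩} : Set ℕ),
        ∃ s : K0, s ^ 2 = ((49 - (f i : ℤ) ^ n : ℤ) : K0) := by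
      rintro ⟨i, hi⟩
      have : K i = K0 := congrArg Subtype.val hi
      subst this
      exact hKs i
    choose s hs using hs
    obtain ⟨i, j, hij, hsq⟩ := finite_sq K0 _ s hs
    refine hfr (fun h => hij (Subtype.ext h)) ?_
    convert hsq using 1
    ring
  · rintro _ ⟨m, rfl⟩
    exact hKg m

/-- **`D₄`-fields with large class group.**
For every integer `n > 1` coprime to `6` there are infinitely many pairwise non-isomorphic
totally imaginary Galois number fields `K` of degree `8` with Galois group the dihedral
group `D₄` of order `8`, each a splitting field of an irreducible polynomial
`x⁸ + ((yⁿ-481)/36)x⁶ - ((yⁿ-733)/18)x⁴ + ((yⁿ-481)/36)x² + 1`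
with `y` a positive integer, `5 ∤ y`, `7 ∤ y`, and `y ≡ 49 (mod 144)` if `n ≡ 1 (mod 3)`,
`y ≡ 97 (mod 144)` if `n ≡ 2 (mod 3)`, such that `rank_n Cl(K) ≥ 7`. -/
theorem D4_large_class_group (n : ℕ) (hn : 1 < n) (hn6 : Nat.Coprime n 6) :
    ∃ S : Set (IntermediateField ℚ ℂ), S.Infinite ∧
      (∀ K ∈ S, ∀ K' ∈ S, K ≠ K' → IsEmpty (K ≃+* K')) ∧
      ∀ K ∈ S, ∃ y : ℕ, 0 < y ∧ ¬ (5 ∣ y) ∧ ¬ (7 ∣ y) ∧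
        (n % 3 = 1 → y % 144 = 49) ∧ (n % 3 = 2 → y % 144 = 97) ∧
        (let P : Polynomial ℚ := X ^ 8 + C (((y : ℚ) ^ n - 481) / 36) * X ^ 6 -
          C (((y : ℚ) ^ n - 733) / 18) * X ^ 4 + C (((y : ℚ) ^ n - 481) / 36) * X ^ 2 + 1
         Irreducible P ∧ P.IsSplittingField ℚ K) ∧
        NumberField K ∧ Module.finrank ℚ K = 8 ∧ IsGalois ℚ K ∧
        Nonempty ((K ≃ₐ[ℚ] K) ≃* DihedralGroup 4) ∧
        TotallyImaginary K ∧
        HasZModRankGE (ClassGroup (𝓞 K)) n 7 := by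
  obtain ⟨S, hS, hg⟩ := main_aux n hn hn6
  refine ⟨S, hS, ?_, hg⟩
  intro K hK K' _ hne
  obtain ⟨-, -, -, -, -, -, -, -, -, hgal, -⟩ := hg K hK
  exact ⟨fun e => hne (iso_eq K K' e)⟩
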